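/- arXiv:2512.07759 — 2 statements merged into one kernel-verified Lean document; each statement's English description precedes it below -/
import Mathlib

section
/- The normal closure in GL_2(ℤ) of the diagonal matrix diag(−1, 1) equals the level 2 subgroup of GL_2(ℤ), i.e., the kernel of the reduction homomorphism GL_2(ℤ) → GL_2(ℤ/2ℤ). -/
open Matrix

namespace NormalClosurePaper

/-- The automorphism group of the free group on `n` generators. -/
abbrev FrAut (n : ℕ) := MulAut (FreeGroup (Fin n))

/-- Exponent sum of the generator `x_i` in a word of the free group. -/
def expSum {n : ℕ} (i : Fin n) : FreeGroup (Fin n) →* Multiplicative ℤ :=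
  FreeGroup.lift fun j => Multiplicative.ofAdd (if j = i then (1 : ℤ) else 0)

/-- The abelianized matrix of an automorphism of the free group:
the `(i, j)` entry is the exponent sum of `x_i` in `f x_j`. -/
def mat {n : ℕ} (f : FrAut n) : Matrix (Fin n) (Fin n) ℤ :=
  Matrix.of fun i j => (expSum i (f (FreeGroup.of j))).toAdd

lemma expSum_apply {n : ℕ} (f : FrAut n) (i : Fin n) (w : FreeGroup (Fin n)) :
    (expSum i (f w)).toAdd = ∑ k, mat f i k * (expSum k w).toAdd := by
  induction w using FreeGroup.induction_on with
  | C1 => simp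
  | of j =>
      have h : (expSum i (f (FreeGroup.of j))).toAdd = mat f i j := rfl
      rw [h]
      simp [expSum, mul_ite, Finset.sum_ite_eq]
  | inv_of j ih =>
      simp only [_root_.map_inv, toAdd_inv, mul_neg, Finset.sum_neg_distrib, ih]
  | mul x y ihx ihy =>
      simp only [_root_.map_mul, toAdd_mul, mul_add, Finset.sum_add_distrib, ihx, ihy]

lemma mat_one {n : ℕ} : mat (1 : FrAut n) = 1 := by
  ext i j
  simp [mat, expSum, Matrix.one_apply, eq_comm]

lemma mat_mul {n : ℕ} (f g : FrAut n) : mat (f * g) = mat f * mat g := by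
  ext i j
  rw [Matrix.mul_apply]
  show (expSum i ((f * g) (FreeGroup.of j))).toAdd = _
  rw [show (f * g) (FreeGroup.of j) = f (g (FreeGroup.of j)) from rfl, expSum_apply]
  rfl

/-- The matrix of the induced map on the abelianization, as a monoid homomorphism. -/
def matHom (n : ℕ) : FrAut n →* Matrix (Fin n) (Fin n) ℤ where
  toFun := mat
  map_one' := mat_one
  map_mul' := mat_mul

/-- The homomorphism `Aut(F_n) → GL_n(ℤ)` induced by abelianization. -/
def ρ (n : ℕ) : FrAut n →* GL (Fin n) ℤ := (matHom n).toHomUnits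

/-- The composition of `ρ` with the determinant. -/
def detρ (n : ℕ) : FrAut n →* ℤˣ := (Matrix.GeneralLinearGroup.det).comp (ρ n)

/-- The special automorphism group `SAut(F_n)`: automorphisms whose induced matrix
has determinant `1`. -/
def SAut (n : ℕ) : Subgroup (FrAut n) := (detρ n).ker

/-- The Torelli subgroup `IA_n`, the kernel of `ρ`. -/
def IA (n : ℕ) : Subgroup (FrAut n) := (ρ n).ker

/-- The group of inner automorphisms of the free group. -/
def Inn (n : ℕ) : Subgroup (FrAut n) := (MulAut.conj (G := FreeGroup (Fin n))).range

instance Inn_normal (n : ℕ) : (Inn n).Normal := by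
  constructor
  rintro - ⟨a, rfl⟩ g
  refine ⟨g a, ?_⟩
  ext y
  simp [MulAut.conj_apply, MulAut.mul_apply, _root_.map_mul, _root_.map_inv]

/-- The outer automorphism group `Out(F_n)`. -/
abbrev OutF (n : ℕ) := FrAut n ⧸ Inn n

/-- The projection `Aut(F_n) → Out(F_n)`. -/
def toOut (n : ℕ) : FrAut n →* OutF n := QuotientGroup.mk' (Inn n)

lemma mat_conj {n : ℕ} (g : FreeGroup (Fin n)) : mat (MulAut.conj g) = 1 := by
  rw [← mat_one (n := n)]
  ext i j
  simp only [mat, Matrix.of_apply, MulAut.conj_apply, MulAut.one_apply, _root_.map_mul,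
    _root_.map_inv, toAdd_mul, toAdd_inv]
  omega

lemma ρ_conj {n : ℕ} (g : FreeGroup (Fin n)) : ρ n (MulAut.conj g) = 1 :=
  Units.ext (mat_conj g)

/-- The homomorphism `Out(F_n) → GL_n(ℤ)` induced by abelianization. -/
def ρOut (n : ℕ) : OutF n →* GL (Fin n) ℤ :=
  QuotientGroup.lift (Inn n) (ρ n) (by rintro - ⟨g, rfl⟩; exact ρ_conj g)

/-- The composition of `ρOut` with the determinant. -/
def detρOut (n : ℕ) : OutF n →* ℤˣ := (Matrix.GeneralLinearGroup.det).comp (ρOut n)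

/-- The special outer automorphism group `SOut(F_n)`. -/
def SOut (n : ℕ) : Subgroup (OutF n) := (detρOut n).ker

/-- Entrywise reduction `GL_n(ℤ) → GL_n(ℤ/ℓℤ)`. -/
def redGL (n ℓ : ℕ) : GL (Fin n) ℤ →* GL (Fin n) (ZMod ℓ) :=
  Units.map (RingHom.mapMatrix (Int.castRingHom (ZMod ℓ))).toMonoidHom

/-- The subgroup `GΓ_n(ℓ)` of `GL_n(ℤ)` of matrices congruent to the identity mod `ℓ`. -/
def GGamma (n ℓ : ℕ) : Subgroup (GL (Fin n) ℤ) := (redGL n ℓ).ker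

/-- The level `ℓ` congruence subgroup `Γ_n(ℓ)` (viewed inside `GL_n(ℤ)`): matrices with
determinant `1` that are congruent to the identity mod `ℓ`. -/
def GammaGL (n ℓ : ℕ) : Subgroup (GL (Fin n) ℤ) :=
  GGamma n ℓ ⊓ (Matrix.GeneralLinearGroup.det).ker

/-- Reduction `SL_n(ℤ) → SL_n(ℤ/ℓℤ)`. -/
def redSL (n ℓ : ℕ) : Matrix.SpecialLinearGroup (Fin n) ℤ →*
    Matrix.SpecialLinearGroup (Fin n) (ZMod ℓ) :=
  Matrix.SpecialLinearGroup.map (Int.castRingHom (ZMod ℓ))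

/-- Projection `SL_n(ℤ/ℓℤ) → PSL_n(ℤ/ℓℤ)`. -/
def projPSL (n ℓ : ℕ) : Matrix.SpecialLinearGroup (Fin n) (ZMod ℓ) →*
    Matrix.ProjectiveSpecialLinearGroup (Fin n) (ZMod ℓ) :=
  QuotientGroup.mk' _


/-- The matrix `diag(-1, 1)` as an element of `GL_2(ℤ)`. -/
def diagNegOne : GL (Fin 2) ℤ where
  val := Matrix.diagonal ![-1, 1]
  inv := Matrix.diagonal ![-1, 1]
  val_inv := by
    ext i j
    fin_cases i <;> fin_cases j <;>
      simp [Matrix.mul_apply, Fin.sum_univ_two, Matrix.diagonal, Matrix.one_apply]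
  inv_val := by
    ext i j
    fin_cases i <;> fin_cases j <;>
      simp [Matrix.mul_apply, Fin.sum_univ_two, Matrix.diagonal, Matrix.one_apply]

/-!
Conjugation by `s = diag(-1, 1)` inverts `upperRightHom k = [1, k; 0, 1]`, so the square of the
latter, which is `[1, 2k; 0, 1]`, is the product of a conjugate of `s` and of `s⁻¹`.  Conjugating by
the coordinate swap, the normal closure of `s` also contains `[1, 0; 2k, 1]` and `diag(1, -1)`.
The first column of a matrix congruent to the identity mod 2 has an odd and an even entry, and a
Euclidean algorithm which only uses even quotients still reduces such a column to `(±1, 0)`: since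
its entries `a` and `c` differ mod 2, the residue of `a` modulo `2c` of minimal absolute value
cannot be `±c`.  What is left is a diagonal matrix of signs times some `[1, 2k; 0, 1]`.
-/

open GeneralLinearGroup (upperRightHom)

lemma sq_mem_normalClosure_singleton_of_conj_eq_inv {G : Type*} [Group G] {s x : G}
    (h : s * x * s⁻¹ = x⁻¹) : x ^ 2 ∈ Subgroup.normalClosure {s} := by
  have hs : s ∈ Subgroup.normalClosure {s} := Subgroup.subset_normalClosure rfl
  have hx : x ^ 2 = x * s * x⁻¹ * s⁻¹ :=
    calc x ^ 2 = x * (s * x * s⁻¹)⁻¹ := by rw [h, inv_inv, sq]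
      _ = x * s * x⁻¹ * s⁻¹ := by group
  rw [hx]
  exact mul_mem (Subgroup.normalClosure_normal.conj_mem s hs x) (inv_mem hs)

lemma exists_even_abs_add_mul_lt {a c : ℤ} (hc : c ≠ 0) (hac : Odd (a + c)) :
    ∃ b, Even b ∧ |a + b * c| < |c| := by
  have hdiv : a % c + c * (a / c) = a := Int.emod_add_mul_ediv a c
  have hlt : a % c < |c| := Int.emod_lt_abs a hc
  have hnonneg : 0 ≤ a % c := Int.emod_nonneg a hc
  rcases Int.even_or_odd (a / c) with hq | hq
  · refine ⟨-(a / c), hq.neg, ?_⟩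
    rwa [show a + -(a / c) * c = a % c by linarith, abs_of_nonneg hnonneg]
  · have hsign : Odd c.sign := by
      rcases hc.lt_or_gt with h | h
      · simp [Int.sign_eq_neg_one_of_neg h]
      · simp [Int.sign_eq_one_of_pos h]
    have hne : a % c ≠ 0 := fun hzero => by
      rw [hzero, zero_add] at hdiv
      rw [← hdiv, ← mul_add_one] at hac
      exact Int.not_even_iff_odd.2 hac (hq.add_one.mul_left c)
    have hsub : a + -(a / c + c.sign) * c = a % c - |c| := by
      rw [← Int.sign_mul_self_eq_abs]
      linarith
    refine ⟨-(a / c + c.sign), (hq.add_odd hsign).neg, ?_⟩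
    rw [hsub, abs_lt]
    constructor <;> linarith [hnonneg.lt_of_ne' hne]

section Diagonal

variable {n R : Type*} [Fintype n] [DecidableEq n]

/-- The embedding of the diagonal torus `(Rˣ)ⁿ` in `GL n R`. -/
def diagonalHom [Semiring R] : (n → Rˣ) →* GL n R :=
  (Units.map (diagonalRingHom n R).toMonoidHom).comp MulEquiv.piUnits.symm.toMonoidHom

@[simp]
lemma val_diagonalHom [Semiring R] (u : n → Rˣ) :
    (diagonalHom u).val = diagonal fun i => (u i : R) := rfl

lemma swap_mul_diagonalHom_mul_swap_inv [CommRing R] (i j : n) (u : n → Rˣ) :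
    GeneralLinearGroup.swap R i j * diagonalHom u * (GeneralLinearGroup.swap R i j)⁻¹ =
      diagonalHom (u ∘ Equiv.swap i j) := by
  rw [mul_inv_eq_iff_eq_mul]
  ext a b
  rw [GeneralLinearGroup.coe_mul, GeneralLinearGroup.coe_mul, val_diagonalHom, val_diagonalHom,
    mul_diagonal, diagonal_mul]
  by_cases h : Equiv.swap i j a = b <;> simp [Matrix.swap, PEquiv.toMatrix_apply, h]

end Diagonal

section Ring

variable {R : Type*} [Ring R]

/-- The map sending `x` to `[1, 0; x, 1]`, the transposed counterpart of `upperRightHom`. -/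
def lowerLeftHom : AddChar R (GL (Fin 2) R) where
  toFun x := ⟨!![1, 0; x, 1], !![1, 0; -x, 1], by simp [one_fin_two], by simp [one_fin_two]⟩
  map_zero_eq_one' := by simp [Units.ext_iff, one_fin_two]
  map_add_eq_mul' a b := by simp [Units.ext_iff]

@[simp]
lemma val_lowerLeftHom (x : R) : (lowerLeftHom x).val = !![1, 0; x, 1] := rfl

lemma upperRightHom_mulVec (x : R) (v : Fin 2 → R) :
    (upperRightHom x).val *ᵥ v = ![v 0 + x * v 1, v 1] := by
  ext i
  fin_cases i <;> simp [mulVec, dotProduct]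

lemma lowerLeftHom_mulVec (x : R) (v : Fin 2 → R) :
    (lowerLeftHom x).val *ᵥ v = ![v 0, v 1 + x * v 0] := by
  ext i
  fin_cases i <;> simp [mulVec, dotProduct, add_comm]

lemma diagonalHom_mul_upperRightHom_mul_inv (u : Fin 2 → Rˣ) (x : R) :
    diagonalHom u * upperRightHom x * (diagonalHom u)⁻¹ =
      upperRightHom (u 0 * x * ↑(u 1)⁻¹) := by
  rw [mul_inv_eq_iff_eq_mul]
  refine Units.ext (Matrix.ext fun i j => ?_)
  fin_cases i <;> fin_cases j <;> simp [mul_apply]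

end Ring

section CommRing

variable {R : Type*} [CommRing R]

lemma swap_mul_upperRightHom_mul_swap_inv (x : R) :
    GeneralLinearGroup.swap R 0 1 * upperRightHom x * (GeneralLinearGroup.swap R 0 1)⁻¹ =
      lowerLeftHom x := by
  rw [mul_inv_eq_iff_eq_mul]
  ext i j
  fin_cases i <;> fin_cases j <;>
    simp [mul_apply, Matrix.swap, Equiv.Perm.permMatrix, PEquiv.toMatrix_apply]

lemma exists_eq_diagonalHom_mul_upperRightHom {g : GL (Fin 2) R} (hg : g.val 1 0 = 0) :
    ∃ (u : Fin 2 → Rˣ) (x : R), g = diagonalHom u * upperRightHom x := by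
  have hdet : g.val 0 0 * g.val 1 1 = GeneralLinearGroup.det g := by
    simp [det_fin_two, hg]
  obtain ⟨⟨a, ha⟩, d, hd⟩ := IsUnit.mul_iff.1 (hdet ▸ Units.isUnit _)
  refine ⟨![a, d], ↑a⁻¹ * g.val 0 1, Units.ext ?_⟩
  rw [eta_fin_two g.val, hg, ← ha, ← hd]
  ext i j
  fin_cases i <;> fin_cases j <;> simp [mul_apply]

end CommRing

lemma exists_mem_mulVec_one_eq_zero {H : Subgroup (GL (Fin 2) ℤ)}
    (hupper : ∀ b : ℤ, Even b → upperRightHom b ∈ H)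
    (hlower : ∀ b : ℤ, Even b → lowerLeftHom b ∈ H)
    {v : Fin 2 → ℤ} (hv₀ : Odd (v 0)) (hv₁ : Even (v 1)) :
    ∃ h ∈ H, (h.val *ᵥ v) 1 = 0 := by
  induction hn : (v 1).natAbs using Nat.strong_induction_on generalizing v with
  | _ n ih =>
    by_cases hzero : v 1 = 0
    · exact ⟨1, one_mem H, by simpa using hzero⟩
    obtain ⟨k, hk, hlt₀⟩ := exists_even_abs_add_mul_lt hzero (hv₀.add_even hv₁)
    set a := v 0 + k * v 1
    have ha : Odd a := hv₀.add_even (hk.mul_right _)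
    have ha_ne_zero : a ≠ 0 := by
      rintro h
      simp [h] at ha
    obtain ⟨l, hl, hlt₁⟩ := exists_even_abs_add_mul_lt ha_ne_zero (hv₁.add_odd ha)
    set c := v 1 + l * a
    have hc : Even c := hv₁.add (hl.mul_right a)
    have hdecr : c.natAbs < n := by
      rw [← hn]
      zify
      exact hlt₁.trans hlt₀
    have hmulVec : (lowerLeftHom l * upperRightHom k).val *ᵥ v = ![a, c] := by
      rw [Units.val_mul, ← mulVec_mulVec, upperRightHom_mulVec, lowerLeftHom_mulVec]
      rfl
    obtain ⟨h, hh, hzero⟩ := ih c.natAbs hdecr (v := ![a, c]) ha hc rfl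
    refine ⟨h * (lowerLeftHom l * upperRightHom k),
      mul_mem hh (mul_mem (hlower l hl) (hupper k hk)), ?_⟩
    rwa [Units.val_mul, ← mulVec_mulVec, hmulVec]

lemma mem_GGamma_iff {n ℓ : ℕ} {g : GL (Fin n) ℤ} :
    g ∈ GGamma n ℓ ↔ ∀ i j, (g.val i j : ZMod ℓ) = (1 : Matrix (Fin n) (Fin n) (ZMod ℓ)) i j := by
  rw [GGamma, MonoidHom.mem_ker, GeneralLinearGroup.ext_iff]
  rfl

lemma mem_GGamma_two_two_iff {g : GL (Fin 2) ℤ} :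
    g ∈ GGamma 2 2 ↔
      (Odd (g.val 0 0) ∧ Even (g.val 0 1)) ∧ Even (g.val 1 0) ∧ Odd (g.val 1 1) := by
  simp [mem_GGamma_iff, Fin.forall_fin_two, ZMod.intCast_eq_zero_iff_even,
    ZMod.intCast_eq_one_iff_odd]

lemma upperRightHom_mem_GGamma_two_two_iff {b : ℤ} : upperRightHom b ∈ GGamma 2 2 ↔ Even b := by
  simp [mem_GGamma_two_two_iff]

lemma diagNegOne_eq_diagonalHom : diagNegOne = diagonalHom ![-1, 1] := by
  ext i j
  fin_cases i <;> fin_cases j <;> rfl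

lemma normalClosure_diagNegOne_le_GGamma : Subgroup.normalClosure {diagNegOne} ≤ GGamma 2 2 := by
  have : (GGamma 2 2).Normal := MonoidHom.normal_ker _
  refine Subgroup.normalClosure_le_normal (Set.singleton_subset_iff.2 ?_)
  simp [mem_GGamma_two_two_iff, diagNegOne_eq_diagonalHom]

lemma diagonalHom_mem_normalClosure_diagNegOne (u : Fin 2 → ℤˣ) :
    diagonalHom u ∈ Subgroup.normalClosure {diagNegOne} := by
  have hs : diagonalHom ![-1, 1] ∈ Subgroup.normalClosure {diagNegOne} :=
    Subgroup.subset_normalClosure diagNegOne_eq_diagonalHom.symm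
  have ht : diagonalHom ![1, -1] ∈ Subgroup.normalClosure {diagNegOne} := by
    have hswap : ![1, -1] = ![-1, (1 : ℤˣ)] ∘ Equiv.swap 0 1 := by decide
    rw [hswap, ← swap_mul_diagonalHom_mul_swap_inv]
    exact Subgroup.normalClosure_normal.conj_mem _ hs _
  have hu : u = ![u 0, u 1] := by ext i; fin_cases i <;> rfl
  rcases Int.units_eq_one_or (u 0) with h₀ | h₀ <;>
    rcases Int.units_eq_one_or (u 1) with h₁ | h₁ <;>
    rw [hu, h₀, h₁]
  · have hone : ![1, (1 : ℤˣ)] = 1 := by decide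
    rw [hone, map_one]
    exact one_mem _
  · exact ht
  · exact hs
  · have hneg : ![-1, (-1 : ℤˣ)] = ![-1, 1] * ![1, -1] := by decide
    rw [hneg, map_mul]
    exact mul_mem hs ht

lemma upperRightHom_mem_normalClosure_diagNegOne {b : ℤ} (hb : Even b) :
    upperRightHom b ∈ Subgroup.normalClosure {diagNegOne} := by
  obtain ⟨k, rfl⟩ := hb
  rw [AddChar.map_add_eq_mul, ← sq]
  apply sq_mem_normalClosure_singleton_of_conj_eq_inv
  rw [diagNegOne_eq_diagonalHom, diagonalHom_mul_upperRightHom_mul_inv, ← AddChar.map_neg_eq_inv]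
  simp

lemma lowerLeftHom_mem_normalClosure_diagNegOne {b : ℤ} (hb : Even b) :
    lowerLeftHom b ∈ Subgroup.normalClosure {diagNegOne} := by
  rw [← swap_mul_upperRightHom_mul_swap_inv]
  exact Subgroup.normalClosure_normal.conj_mem _ (upperRightHom_mem_normalClosure_diagNegOne hb) _

/-- The normal closure in `GL_2(ℤ)` of `diag(-1, 1)` is the level 2 subgroup of `GL_2(ℤ)`,
the kernel of the reduction `GL_2(ℤ) → GL_2(ℤ/2ℤ)`. -/
theorem normalClosure_diagNegOne_eq_level_two :
    Subgroup.normalClosure {diagNegOne} = GGamma 2 2 := by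
  refine le_antisymm normalClosure_diagNegOne_le_GGamma fun g hg => ?_
  obtain ⟨⟨hodd, -⟩, heven, -⟩ := mem_GGamma_two_two_iff.1 hg
  obtain ⟨h, hh, hzero⟩ := exists_mem_mulVec_one_eq_zero (v := g.val.col 0)
    (fun _ => upperRightHom_mem_normalClosure_diagNegOne)
    (fun _ => lowerLeftHom_mem_normalClosure_diagNegOne) hodd heven
  obtain ⟨u, b, hub⟩ := exists_eq_diagonalHom_mul_upperRightHom (g := h * g) hzero
  have hu := diagonalHom_mem_normalClosure_diagNegOne u
  have hb : Even b := by
    rw [← upperRightHom_mem_GGamma_two_two_iff,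
      ← Subgroup.mul_mem_cancel_left _ (normalClosure_diagNegOne_le_GGamma hu), ← hub]
    exact mul_mem (normalClosure_diagNegOne_le_GGamma hh) hg
  rw [← Subgroup.mul_mem_cancel_left _ hh, hub]
  exact mul_mem hu (upperRightHom_mem_normalClosure_diagNegOne hb)

end NormalClosurePaper
end

section
/- Let n ≥ 3 and let f ∈ Aut(F_n) be the automorphism with f(x_i) = x_i^{-1} for all 1 ≤ i ≤ n. Then IA_n ⊆ N(f) and N(f) = ρ⁻¹({I, −I}); equivalently, there is a short exact sequence 1 → IA_n → N(f) → {±I} → 1. -/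
open Matrix

namespace NormalClosurePaper

/-!
Let `f` invert every generator, let `N` be its normal closure and `T = N ∩ IA_n`. As `ρ f = -1` is
central, every commutator `⁅f, g⁆` lies in `T`, so `f` becomes central in `Aut(F_n) / T`.
Conjugation by `f` turns the right transvection `x_j ↦ x_j x_i` into the left transvection
`x_j ↦ x_i x_j`; these therefore agree modulo `T`. This identification turns the relations that
hold in `Aut(F_n)` into the Steinberg relations between elementary matrices and signed permutation
matrices. By Nielsen's theorem the transvections and signed permutations generate `Aut(F_n)`, and
the Steinberg relations are enough to present `GL_n(ℤ)`: Euclidean reduction of a column is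
confluent modulo them, which brings an element whose matrix is the identity into a smaller block, up
to elementary matrices in one row. Hence an element of `Aut(F_n) / T` is determined by its matrix,
that is, `IA_n = T ≤ N`.
-/

open FreeGroup (mk of invRev IsReduced mk_toWord isReduced_toWord norm_inv_eq)
open scoped commutatorElement

/-! ### Cancellation in free groups -/

section CommonPrefix

variable {α : Type*} [DecidableEq α]

/-- The length of the longest common prefix of two lists. -/
def lcp : List α → List α → ℕ
  | a :: l, b :: m => if a = b then lcp l m + 1 else 0
  | _, _ => 0

lemma le_lcp_iff {l m : List α} {k : ℕ} :
    k ≤ lcp l m ↔ k ≤ l.length ∧ k ≤ m.length ∧ l.take k = m.take k := by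
  induction l generalizing m k with
  | nil => cases m <;> simp +contextual [lcp]
  | cons a l ih =>
    cases m with
    | nil => simp +contextual [lcp]
    | cons b m =>
      cases k with
      | zero => simp
      | succ k => by_cases hab : a = b <;> simp [lcp, hab, ih]

lemma lcp_comm (l m : List α) : lcp l m = lcp m l :=
  eq_of_forall_le_iff fun k => by rw [le_lcp_iff, le_lcp_iff, eq_comm]; tauto

lemma min_lcp_le (l m p : List α) : min (lcp l m) (lcp m p) ≤ lcp l p := by
  obtain ⟨hl, -, hlm⟩ := le_lcp_iff.1 (min_le_left (lcp l m) (lcp m p))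
  obtain ⟨-, hp, hmp⟩ := le_lcp_iff.1 (min_le_right (lcp l m) (lcp m p))
  exact le_lcp_iff.2 ⟨hl, hp, hlm.trans hmp⟩

lemma lcp_append_append (l m p : List α) : lcp (l ++ m) (l ++ p) = l.length + lcp m p := by
  induction l with
  | nil => simp
  | cons a l ih => simp [lcp, ih]; omega

end CommonPrefix

section GromovProduct

variable {α : Type*}

lemma isReduced_invRev {l : List (α × Bool)} (hl : IsReduced l) : IsReduced (invRev l) := by
  classical
  rw [FreeGroup.isReduced_iff_reduce_eq, FreeGroup.reduce_invRev, hl.reduce_eq]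

variable [DecidableEq α]

lemma norm_mk {l : List (α × Bool)} (hl : IsReduced l) : (mk l).norm = l.length := by
  rw [FreeGroup.norm, FreeGroup.toWord_mk, hl.reduce_eq]

lemma isReduced_of_norm_eq {l : List (α × Bool)} (h : (mk l).norm = l.length) : IsReduced l :=
  .of_reduce_eq (FreeGroup.reduce.red.sublist.eq_of_length h)

lemma isReduced_invRev_append {l m : List (α × Bool)} (hl : IsReduced l) (hm : IsReduced m)
    (h : lcp l m = 0) : IsReduced (invRev l ++ m) := by
  cases l with
  | nil => simpa [invRev] using hm
  | cons a l =>
    refine List.isChain_append.2 ⟨isReduced_invRev hl, hm, fun a' ha' b hb hab => ?_⟩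
    cases m with
    | nil => simp at hb
    | cons c m =>
      obtain rfl : (a.1, !a.2) = a' := by simpa [invRev] using ha'
      obtain rfl : c = b := by simpa using hb
      have hne : a ≠ c := by simpa [lcp] using h
      have : a.2 ≠ c.2 := fun h2 => hne (Prod.ext hab h2)
      grind

lemma norm_inv_mk_mul_mk {l m : List (α × Bool)} (hl : IsReduced l) (hm : IsReduced m) :
    ((mk l)⁻¹ * mk m).norm + 2 * lcp l m = l.length + m.length := by
  obtain ⟨-, -, htake⟩ := le_lcp_iff.1 (le_refl (lcp l m))
  obtain ⟨p, l', m', rfl, rfl, h⟩ : ∃ p l' m', p ++ l' = l ∧ p ++ m' = m ∧ lcp l m = p.length :=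
    ⟨l.take (lcp l m), _, m.drop (lcp l m), List.take_append_drop _ _,
      by rw [htake, List.take_append_drop],
      by rw [List.length_take, min_eq_left (le_lcp_iff.1 le_rfl).1]⟩
  have hdisjoint : lcp l' m' = 0 := by
    rw [lcp_append_append] at h
    omega
  have hprod : (mk (p ++ l'))⁻¹ * mk (p ++ m') = mk (invRev l' ++ m') := by
    simp only [← FreeGroup.mul_mk, ← FreeGroup.inv_mk]
    group
  rw [hprod, norm_mk (isReduced_invRev_append (hl.infix (List.suffix_append p l').isInfix)
    (hm.infix (List.suffix_append p m').isInfix) hdisjoint), h]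
  simp only [List.length_append, FreeGroup.invRev_length]
  omega

/-- The length of the common prefix of the reduced words of `x` and `y`: the Gromov product of `x`
and `y`, based at `1`, in the Cayley tree of the free group. -/
def gromovProduct (x y : FreeGroup α) : ℕ := lcp x.toWord y.toWord

lemma gromovProduct_comm (x y : FreeGroup α) : gromovProduct x y = gromovProduct y x :=
  lcp_comm _ _

lemma norm_inv_mul_add_two_mul_gromovProduct (x y : FreeGroup α) :
    (x⁻¹ * y).norm + 2 * gromovProduct x y = x.norm + y.norm := by
  simpa only [mk_toWord, gromovProduct, FreeGroup.norm] using
    norm_inv_mk_mul_mk (isReduced_toWord (x := x)) (isReduced_toWord (x := y))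

lemma norm_mul_add_two_mul_gromovProduct (x y : FreeGroup α) :
    (x * y).norm + 2 * gromovProduct x⁻¹ y = x.norm + y.norm := by
  simpa [norm_inv_eq] using norm_inv_mul_add_two_mul_gromovProduct x⁻¹ y

lemma min_gromovProduct_le (x y z : FreeGroup α) :
    min (gromovProduct x y) (gromovProduct y z) ≤ gromovProduct x z :=
  min_lcp_le _ _ _

lemma take_toWord_inv (x : FreeGroup α) (k : ℕ) :
    x⁻¹.toWord.take k = invRev (x.toWord.drop (x.norm - k)) := by
  rw [FreeGroup.toWord_inv, invRev, invRev, List.take_reverse, List.map_drop, List.length_map,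
    FreeGroup.norm]

lemma eq_one_of_norm_le_two_mul_gromovProduct {x : FreeGroup α}
    (h : x.norm ≤ 2 * gromovProduct x⁻¹ x) : x = 1 := by
  have hlen : x.toWord.length = x.norm := rfl
  rcases Nat.even_or_odd' x.norm with ⟨k, hk | hk⟩
  · obtain ⟨-, -, htake⟩ := le_lcp_iff.1 (show k ≤ gromovProduct x⁻¹ x by omega)
    rw [take_toWord_inv, show x.norm - k = k by omega] at htake
    rw [← mk_toWord (x := x), ← List.take_append_drop k x.toWord, ← htake, ← FreeGroup.mul_mk,
      ← FreeGroup.inv_mk, inv_mul_cancel]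
  · -- The middle letter of `x` would be its own inverse.
    obtain ⟨-, -, htake⟩ := le_lcp_iff.1 (show k + 1 ≤ gromovProduct x⁻¹ x by omega)
    have hmid := congrArg (fun l => l[k]?) htake
    have hrev : x.toWord.length - 1 - k = k := by omega
    have hlt : k < x.toWord.length := by omega
    simp [FreeGroup.toWord_inv, invRev, hrev, hlt, Prod.ext_iff] at hmid

end GromovProduct

section WordVal

variable {α : Type*} [Fintype α]

/-- The value of a word, read as the digits of a number with the most significant letter first. It
orders words of equal length lexicographically. Adding `2` keeps the base above `1`. -/
noncomputable def wordVal (l : List α) : ℕ :=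
  Nat.ofDigits (Fintype.card α + 2) (l.reverse.map fun a => (Fintype.equivFin α a : ℕ))

lemma wordVal_append (l m : List α) :
    wordVal (l ++ m) = (Fintype.card α + 2) ^ m.length * wordVal l + wordVal m := by
  simp [wordVal, Nat.ofDigits_append, add_comm]

lemma lt_of_mem_map_equivFin (l : List α) :
    ∀ d ∈ l.map (fun a => (Fintype.equivFin α a : ℕ)), d < Fintype.card α + 2 := by
  simp only [List.mem_map]
  rintro - ⟨a, -, rfl⟩
  omega

lemma wordVal_lt (l : List α) : wordVal l < (Fintype.card α + 2) ^ l.length := by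
  simpa [wordVal] using
    Nat.ofDigits_lt_base_pow_length (by omega) (lt_of_mem_map_equivFin l.reverse)

lemma eq_of_wordVal_eq {l m : List α} (hlen : l.length = m.length)
    (h : wordVal l = wordVal m) : l = m := by
  have hinj : Function.Injective fun a : α => (Fintype.equivFin α a : ℕ) :=
    Fin.val_injective.comp (Fintype.equivFin α).injective
  exact List.reverse_injective <| hinj.list_map <|
    Nat.ofDigits_inj_of_len_eq (by omega) (by simpa using hlen) (lt_of_mem_map_equivFin _)
      (lt_of_mem_map_equivFin _) h

end WordVal

section Weight

variable {α : Type*} [DecidableEq α] [Fintype α]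

/-- The tie-breaker between elements of equal length in Nielsen reduction. It is symmetric under
inversion and dominated by the first halves of the reduced words of `x` and `x⁻¹`. -/
noncomputable def rank (x : FreeGroup α) : ℕ := wordVal x.toWord + wordVal x⁻¹.toWord

lemma rank_inv (x : FreeGroup α) : rank x⁻¹ = rank x := by
  rw [rank, rank, inv_inv, add_comm]

lemma wordVal_le_of_rank_le {p q r : List (α × Bool)} (hpr : IsReduced (p ++ r))
    (hqr : IsReduced (q ++ r)) (hpq : p.length = q.length) (hle : q.length ≤ r.length)
    (h : rank (mk (p ++ r)) ≤ rank (mk (q ++ r))) : wordVal p ≤ wordVal q := by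
  have rank_eq : ∀ s : List (α × Bool), IsReduced (s ++ r) → rank (mk (s ++ r)) =
      (Fintype.card (α × Bool) + 2) ^ r.length * wordVal s + wordVal r +
        ((Fintype.card (α × Bool) + 2) ^ s.length * wordVal (invRev r) + wordVal (invRev s)) := by
    intro s hs
    rw [rank, FreeGroup.toWord_inv, FreeGroup.toWord_mk, hs.reduce_eq, FreeGroup.invRev_append,
      wordVal_append, wordVal_append, FreeGroup.invRev_length]
  rw [rank_eq p hpr, rank_eq q hqr, hpq] at h
  have hlt : wordVal (invRev q) < (Fintype.card (α × Bool) + 2) ^ r.length :=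
    (wordVal_lt _).trans_le
      (Nat.pow_le_pow_right (by omega) (by rwa [FreeGroup.invRev_length]))
  generalize (Fintype.card (α × Bool) + 2) ^ r.length = B at h hlt
  by_contra! hlt'
  have := Nat.mul_le_mul_left B hlt'
  rw [Nat.mul_succ] at this
  omega

/-- The well-founded measure of Nielsen reduction: length first, ties broken by `rank`. -/
noncomputable def weight (x : FreeGroup α) : ℕ ×ₗ ℕ := toLex (x.norm, rank x)

lemma weight_inv (x : FreeGroup α) : weight x⁻¹ = weight x := by
  rw [weight, weight, norm_inv_eq, rank_inv]

lemma norm_le_of_weight_le {x y : FreeGroup α} (h : weight x ≤ weight y) : x.norm ≤ y.norm :=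
  (Prod.Lex.toLex_le_toLex'.1 h).1

lemma wordVal_take_le {x y : FreeGroup α} {k : ℕ} (hk : gromovProduct x⁻¹ y = k)
    (hy : y.norm = 2 * k) (hx : 2 * k ≤ x.norm) (h : weight x ≤ weight (x * y)) :
    wordVal (y.toWord.take k) ≤ wordVal (y⁻¹.toWord.take k) := by
  obtain ⟨-, hky, htake⟩ := le_lcp_iff.1 hk.ge
  have hnorm : (x * y).norm = x.norm := by
    have := norm_mul_add_two_mul_gromovProduct x y
    omega
  set p := y.toWord.take k
  set q := y⁻¹.toWord.take k with hq
  set r := x⁻¹.toWord.drop k with hr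
  have hplen : p.length = k := List.length_take_of_le hky
  have hqlen : q.length = k :=
    List.length_take_of_le (by rw [FreeGroup.toWord_inv, FreeGroup.invRev_length]; exact hky)
  have hrlen : r.length = x.norm - k := by
    rw [hr, List.length_drop, ← norm_inv_eq, FreeGroup.norm]
  have hxpr : x⁻¹.toWord = p ++ r := by rw [← htake, List.take_append_drop]
  have hypq : y = mk p * (mk q)⁻¹ := by
    rw [hq, take_toWord_inv, show y.norm - k = k by omega, FreeGroup.inv_mk,
      FreeGroup.invRev_invRev, FreeGroup.mul_mk, List.take_append_drop, mk_toWord]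
  have hxy : (x * y)⁻¹ = mk (q ++ r) := by
    rw [_root_.mul_inv_rev, ← mk_toWord (x := x⁻¹), hxpr, hypq]
    simp only [← FreeGroup.mul_mk]
    group
  have hqr : (mk (q ++ r)).norm = (q ++ r).length := by
    rw [← hxy, norm_inv_eq, hnorm, List.length_append, hqlen, hrlen]
    omega
  refine wordVal_le_of_rank_le (hxpr ▸ isReduced_toWord) (isReduced_of_norm_eq hqr) (by omega)
    (by omega) ?_
  rw [← hxpr, mk_toWord, ← hxy, rank_inv, rank_inv]
  exact (Prod.Lex.toLex_le_toLex'.1 h).2 hnorm.symm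

end Weight

/-! ### Nielsen reduced tuples -/

section NielsenReduced

variable {α β : Type*}

/-- The inverse letter. -/
def flipLetter (a : α × Bool) : α × Bool := (a.1, !a.2)

lemma mk_flipLetter (a : α × Bool) : mk [flipLetter a] = (mk [a])⁻¹ := rfl

lemma flipLetter_compatible {a b : α × Bool} (h : a.1 = b.1 → a.2 = b.2) :
    (flipLetter b).1 = (flipLetter a).1 → (flipLetter b).2 = (flipLetter a).2 :=
  fun hba => congrArg (!·) (h hba.symm).symm

lemma map_mk_cons (g : FreeGroup α →* FreeGroup β) (a : α × Bool) (l : List (α × Bool)) :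
    g (mk (a :: l)) = g (mk [a]) * g (mk l) := by
  rw [← map_mul, FreeGroup.mul_mk, List.singleton_append]

variable [DecidableEq β] {g : FreeGroup α →* FreeGroup β}

/-- The number of letters of the image of `a` that cancel when it is multiplied by the image of
`b`. -/
def cancel (g : FreeGroup α →* FreeGroup β) (a b : α × Bool) : ℕ :=
  gromovProduct (g (mk [a]))⁻¹ (g (mk [b]))

lemma cancel_flipLetter (a b : α × Bool) :
    cancel g (flipLetter b) (flipLetter a) = cancel g a b := by
  simp only [cancel, mk_flipLetter, map_inv, inv_inv]
  exact gromovProduct_comm _ _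

lemma norm_map_flipLetter (a : α × Bool) : (g (mk [flipLetter a])).norm = (g (mk [a])).norm := by
  rw [mk_flipLetter, map_inv, norm_inv_eq]

lemma norm_mul_add_two_mul_cancel (a b : α × Bool) :
    (g (mk [a]) * g (mk [b])).norm + 2 * cancel g a b = (g (mk [a])).norm + (g (mk [b])).norm :=
  norm_mul_add_two_mul_gromovProduct _ _

/-- The images of the generators form a Nielsen reduced tuple: they are nontrivial and no elementary
Nielsen move lowers their weight. -/
structure NielsenReduced [Fintype β] (g : FreeGroup α →* FreeGroup β) : Prop where
  intro ::
  map_of_ne_one : ∀ i, g (of i) ≠ 1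
  weight_le : ∀ a b : α × Bool, a.1 ≠ b.1 → weight (g (mk [a])) ≤ weight (g (mk [a]) * g (mk [b]))

namespace NielsenReduced

variable [Fintype β] (hg : NielsenReduced g) {a b c : α × Bool}
include hg

lemma map_mk_ne_one (a : α × Bool) : g (mk [a]) ≠ 1 := by
  obtain ⟨i, _ | _⟩ := a
  · rw [show mk [(i, false)] = (of i)⁻¹ from rfl, map_inv, Ne, inv_eq_one]
    exact hg.map_of_ne_one i
  · exact hg.map_of_ne_one i

lemma two_mul_cancel_self_lt (a : α × Bool) : 2 * cancel g a a < (g (mk [a])).norm := by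
  by_contra! h
  exact hg.map_mk_ne_one a (eq_one_of_norm_le_two_mul_gromovProduct h)

lemma two_mul_cancel_le (hab : a.1 = b.1 → a.2 = b.2) :
    2 * cancel g a b ≤ (g (mk [b])).norm := by
  by_cases h : a.1 = b.1
  · obtain rfl : a = b := Prod.ext h (hab h)
    exact (hg.two_mul_cancel_self_lt a).le
  · have := norm_le_of_weight_le (hg.weight_le a b h)
    have := norm_mul_add_two_mul_cancel (g := g) a b
    omega

lemma two_mul_cancel_le_left (hab : a.1 = b.1 → a.2 = b.2) :
    2 * cancel g a b ≤ (g (mk [a])).norm := by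
  rw [← cancel_flipLetter, ← norm_map_flipLetter]
  exact hg.two_mul_cancel_le (flipLetter_compatible hab)

lemma wordVal_take_cancel_le (hab : a.1 = b.1 → a.2 = b.2)
    (h : (g (mk [b])).norm = 2 * cancel g a b) :
    wordVal ((g (mk [b])).toWord.take (cancel g a b)) ≤
      wordVal ((g (mk [b]))⁻¹.toWord.take (cancel g a b)) := by
  have hne : a.1 ≠ b.1 := fun h' => by
    obtain rfl : a = b := Prod.ext h' (hab h')
    exact (hg.two_mul_cancel_self_lt a).ne' h
  exact wordVal_take_le rfl h (hg.two_mul_cancel_le_left hab) (hg.weight_le a b hne)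

lemma cancel_add_cancel_lt (hab : a.1 = b.1 → a.2 = b.2) (hbc : b.1 = c.1 → b.2 = c.2) :
    cancel g a b + cancel g b c < (g (mk [b])).norm := by
  by_contra! hle
  have h1 := hg.two_mul_cancel_le hab
  have h2 := hg.two_mul_cancel_le_left hbc
  set y := g (mk [b]) with hy
  have hnorm : y.norm = 2 * cancel g a b := by omega
  have hflip : cancel g (flipLetter c) (flipLetter b) = cancel g a b := by
    rw [cancel_flipLetter]
    omega
  have v1 := hg.wordVal_take_cancel_le hab hnorm
  have v2 := hg.wordVal_take_cancel_le (flipLetter_compatible hbc)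
    (by rw [hflip, norm_map_flipLetter, ← hy, hnorm])
  rw [hflip, mk_flipLetter, map_inv, inv_inv, ← hy] at v2
  have hlen : cancel g a b ≤ y.toWord.length := by
    rw [← FreeGroup.norm]
    omega
  have hlen' : cancel g a b ≤ y⁻¹.toWord.length := by
    rwa [FreeGroup.toWord_inv, FreeGroup.invRev_length]
  have htake : y.toWord.take (cancel g a b) = y⁻¹.toWord.take (cancel g a b) :=
    eq_of_wordVal_eq (by rw [List.length_take_of_le hlen, List.length_take_of_le hlen'])
      (le_antisymm v1 v2)
  have hgromov : cancel g a b ≤ gromovProduct y⁻¹ y := le_lcp_iff.2 ⟨hlen', hlen, htake.symm⟩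
  have hone : y = 1 := eq_one_of_norm_le_two_mul_gromovProduct (by omega)
  exact hg.map_mk_ne_one b hone

lemma cancel_lt (hab : a.1 = b.1 → a.2 = b.2) : cancel g a b < (g (mk [b])).norm := by
  have := hg.cancel_add_cancel_lt hab (c := b) fun _ => rfl
  omega

lemma gromovProduct_eq_cancel {l : List (α × Bool)} (h : IsReduced (a :: b :: l)) :
    gromovProduct (g (mk [a]))⁻¹ (g (mk (b :: l))) = cancel g a b := by
  induction l generalizing a b with
  | nil => rfl
  | cons c l ih =>
    obtain ⟨hab, hbcl⟩ := FreeGroup.isReduced_cons_cons.1 h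
    have hbc := ih hbcl
    have hlt := hg.cancel_add_cancel_lt hab (FreeGroup.isReduced_cons_cons.1 hbcl).1
    rw [map_mk_cons (l := c :: l)]
    set x := (g (mk [a]))⁻¹
    set y := g (mk [b])
    set z := g (mk (c :: l))
    -- `y * z` agrees with `y` beyond the letters of `y` that cancel against `x⁻¹`.
    have hy : cancel g a b < gromovProduct y (y * z) := by
      have h1 := norm_mul_add_two_mul_gromovProduct y z
      have h2 := norm_inv_mul_add_two_mul_gromovProduct y (y * z)
      rw [inv_mul_cancel_left] at h2
      omega
    have h1 := min_gromovProduct_le x y (y * z)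
    have h2 := min_gromovProduct_le x (y * z) y
    rw [gromovProduct_comm _ y] at h2
    have hxy : gromovProduct x y = cancel g a b := rfl
    omega

lemma length_add_cancel_le {l : List (α × Bool)} (h : IsReduced (a :: b :: l)) :
    (b :: l).length + cancel g a b ≤ (g (mk (b :: l))).norm := by
  induction l generalizing a b with
  | nil =>
    have := hg.cancel_lt (FreeGroup.isReduced_cons_cons.1 h).1
    simp only [List.length_singleton]
    omega
  | cons c l ih =>
    obtain ⟨hab, hbc⟩ := FreeGroup.isReduced_cons_cons.1 h
    have h1 := ih hbc
    have h2 := hg.cancel_add_cancel_lt hab (FreeGroup.isReduced_cons_cons.1 hbc).1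
    have h3 := norm_mul_add_two_mul_gromovProduct (g (mk [b])) (g (mk (c :: l)))
    rw [hg.gromovProduct_eq_cancel hbc] at h3
    rw [map_mk_cons (l := c :: l), List.length_cons]
    omega

lemma length_le_norm_map {l : List (α × Bool)} (h : IsReduced l) : l.length ≤ (g (mk l)).norm := by
  cases l with
  | nil => simp
  | cons a l =>
    have := hg.length_add_cancel_le (FreeGroup.isReduced_cons_cons.2 ⟨fun _ => rfl, h⟩ :
      IsReduced (a :: a :: l))
    omega

lemma norm_le_norm_map [DecidableEq α] (u : FreeGroup α) : u.norm ≤ (g u).norm := by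
  simpa only [mk_toWord, FreeGroup.norm] using hg.length_le_norm_map (isReduced_toWord (x := u))

end NielsenReduced

end NielsenReduced

/-! ### Transvections and signed permutations -/

section Generators

variable {α : Type*}

lemma mulAut_ext {g h : MulAut (FreeGroup α)} (H : ∀ k, g (of k) = h (of k)) : g = h :=
  MulEquiv.toMonoidHom_injective (FreeGroup.ext_hom _ _ H)

lemma zpow_units_zpow_units {G : Type*} [Group G] (x : G) (e d : ℤˣ) :
    (x ^ (e : ℤ)) ^ (d : ℤ) = x ^ ((e * d : ℤˣ) : ℤ) := by
  rw [Units.val_mul, _root_.zpow_mul]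

/-- The endomorphism `x_i ↦ x_{σ i} ^ ε i` of the free group. -/
def signedPermHom (σ : Equiv.Perm α) (ε : α → ℤˣ) : FreeGroup α →* FreeGroup α :=
  FreeGroup.lift fun i => of (σ i) ^ (ε i : ℤ)

lemma signedPermHom_comp (σ τ : Equiv.Perm α) (ε δ : α → ℤˣ) :
    (signedPermHom σ ε).comp (signedPermHom τ δ) =
      signedPermHom (σ * τ) fun i => ε (τ i) * δ i := by
  ext i
  simp [signedPermHom, zpow_units_zpow_units]

lemma signedPermHom_one : signedPermHom (1 : Equiv.Perm α) (fun _ => 1) = MonoidHom.id _ := by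
  ext i
  simp [signedPermHom]

/-- The automorphism `x_i ↦ x_{σ i} ^ ε i` of the free group. -/
def signedPerm (σ : Equiv.Perm α) (ε : α → ℤˣ) : MulAut (FreeGroup α) :=
  (signedPermHom σ ε).toMulEquiv (signedPermHom σ⁻¹ fun i => ε (σ⁻¹ i))
    (by simp [signedPermHom_comp, ← signedPermHom_one])
    (by simp [signedPermHom_comp, ← signedPermHom_one])

@[simp]
lemma signedPerm_of (σ : Equiv.Perm α) (ε : α → ℤˣ) (k : α) :
    signedPerm σ ε (of k) = of (σ k) ^ (ε k : ℤ) :=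
  FreeGroup.lift_apply_of

lemma signedPerm_mul (σ τ : Equiv.Perm α) (ε δ : α → ℤˣ) :
    signedPerm σ ε * signedPerm τ δ = signedPerm (σ * τ) fun i => ε (τ i) * δ i :=
  MulEquiv.toMonoidHom_injective (signedPermHom_comp σ τ ε δ)

/-- The automorphism inverting every generator of the free group. -/
def inversion (α : Type*) : MulAut (FreeGroup α) := signedPerm 1 fun _ => -1

@[simp]
lemma inversion_of (k : α) : inversion α (of k) = (of k)⁻¹ := by
  simp [inversion]

lemma inversion_inv : (inversion α)⁻¹ = inversion α := by
  refine inv_eq_of_mul_eq_one_left (mulAut_ext fun k => ?_)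
  simp

variable [DecidableEq α] {i j k l : α}

/-- The endomorphism `x_j ↦ x_j x_i ^ m` of the free group, fixing the other generators. -/
def rightMulHom (i j : α) (m : ℤ) : FreeGroup α →* FreeGroup α :=
  FreeGroup.lift (Function.update of j (of j * of i ^ m))

lemma rightMulHom_comp_neg (hij : i ≠ j) (m : ℤ) :
    (rightMulHom i j m).comp (rightMulHom i j (-m)) = MonoidHom.id _ := by
  ext k
  obtain rfl | hk := eq_or_ne k j <;> simp [rightMulHom, *]

/-- The right transvection `x_j ↦ x_j x_i`, fixing the other generators; it is the identity for
`i = j`. -/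
def rightTransvection (i j : α) : MulAut (FreeGroup α) :=
  if hij : i ≠ j then
    (rightMulHom i j 1).toMulEquiv (rightMulHom i j (-1))
      (by simpa using rightMulHom_comp_neg hij (-1)) (rightMulHom_comp_neg hij 1)
  else 1

/-- The left transvection `x_j ↦ x_i x_j`, fixing the other generators; it is the identity for
`i = j`. -/
def leftTransvection (i j : α) : MulAut (FreeGroup α) :=
  inversion α * rightTransvection i j * (inversion α)⁻¹

@[simp]
lemma rightTransvection_of (hij : i ≠ j) : rightTransvection i j (of j) = of j * of i := by
  simp [rightTransvection, hij, rightMulHom, MonoidHom.toMulEquiv]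

@[simp]
lemma rightTransvection_of_ne (hk : k ≠ j) : rightTransvection i j (of k) = of k := by
  by_cases hij : i = j <;> simp [rightTransvection, hij, hk, rightMulHom, MonoidHom.toMulEquiv]

@[simp]
lemma rightTransvection_symm_of (hij : i ≠ j) :
    (rightTransvection i j).symm (of j) = of j * (of i)⁻¹ := by
  simp [MulEquiv.symm_apply_eq, hij]

@[simp]
lemma rightTransvection_symm_of_ne (hk : k ≠ j) : (rightTransvection i j).symm (of k) = of k := by
  simp [MulEquiv.symm_apply_eq, hk]

@[simp]
lemma leftTransvection_of (hij : i ≠ j) : leftTransvection i j (of j) = of i * of j := by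
  simp [leftTransvection, inversion_inv, hij]

@[simp]
lemma leftTransvection_of_ne (hk : k ≠ j) : leftTransvection i j (of k) = of k := by
  simp [leftTransvection, inversion_inv, hk]

@[simp]
lemma leftTransvection_symm_of (hij : i ≠ j) :
    (leftTransvection i j).symm (of j) = (of i)⁻¹ * of j := by
  simp [MulEquiv.symm_apply_eq, hij]

@[simp]
lemma leftTransvection_symm_of_ne (hk : k ≠ j) : (leftTransvection i j).symm (of k) = of k := by
  simp [MulEquiv.symm_apply_eq, hk]

lemma rightTransvection_commute_leftTransvection (hij : i ≠ j) (hkl : k ≠ l) (hjk : j ≠ k)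
    (hil : i ≠ l) : Commute (rightTransvection i j) (leftTransvection k l) := by
  refine mulAut_ext fun m => ?_
  by_cases hmj : m = j <;> by_cases hml : m = l <;> simp_all [mul_assoc, hjk.symm]

lemma commutator_leftTransvection_rightTransvection (hij : i ≠ j) (hjk : j ≠ k) (hik : i ≠ k) :
    ⁅leftTransvection i j, rightTransvection j k⁆ = rightTransvection i k := by
  rw [commutatorElement_def, mul_inv_eq_iff_eq_mul, mul_inv_eq_iff_eq_mul]
  refine mulAut_ext fun m => ?_
  obtain rfl | hmk := eq_or_ne m k
  · simp [mul_assoc, hij, hjk, hik, hjk.symm]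
  · obtain rfl | hmj := eq_or_ne m j <;> simp [*]

lemma signedPerm_conj_rightTransvection (σ : Equiv.Perm α) {ε : α → ℤˣ} (hij : i ≠ j)
    (hε : ε j = 1) : signedPerm σ ε * rightTransvection i j * (signedPerm σ ε)⁻¹ =
      rightTransvection (σ i) (σ j) ^ (ε i : ℤ) := by
  rw [mul_inv_eq_iff_eq_mul]
  refine mulAut_ext fun m => ?_
  obtain hi | hi := Int.units_eq_one_or (ε i) <;> obtain rfl | hmj := eq_or_ne m j <;> simp [*]

lemma rightTransvection_mul_inv_mul_leftTransvection (hij : i ≠ j) :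
    rightTransvection i j * (rightTransvection j i)⁻¹ * leftTransvection i j =
      signedPerm (Equiv.swap i j) (Function.update 1 i (-1)) := by
  refine mulAut_ext fun m => ?_
  obtain rfl | hmj := eq_or_ne m j
  · simp [hij, hij.symm]
  obtain rfl | hmi := eq_or_ne m i
  · simp [hmj, hmj.symm]
  · simp [Equiv.swap_apply_of_ne_of_ne, *]

end Generators

section Matrices

variable {n : ℕ}

lemma mat_rightTransvection {i j : Fin n} (hij : i ≠ j) :
    mat (rightTransvection i j) = transvection i j 1 := by
  ext k l
  obtain rfl | hl := eq_or_ne l j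
  · simp [mat, expSum, hij, transvection, Matrix.one_apply, Matrix.single_apply,
      eq_comm]
  · simp [mat, expSum, hl, transvection, Matrix.one_apply, hl.symm, eq_comm]

lemma mat_signedPerm (σ : Equiv.Perm (Fin n)) (ε : Fin n → ℤˣ) :
    mat (signedPerm σ ε) = Matrix.of fun k l => if k = σ l then (ε l : ℤ) else 0 := by
  ext k l
  simp [mat, expSum, eq_comm]

lemma ρ_inversion : ρ n (inversion (Fin n)) = -1 := by
  refine Units.ext ?_
  change mat (signedPerm _ _) = -1
  rw [mat_signedPerm]
  ext k l
  by_cases hkl : k = l <;> simp [hkl]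

end Matrices

section Nielsen

/-- The subgroup of `Aut(F)` generated by the right transvections and the signed permutations. -/
def nielsenSubgroup (α : Type*) [DecidableEq α] : Subgroup (MulAut (FreeGroup α)) :=
  Subgroup.closure
    ({g | ∃ i j, i ≠ j ∧ g = rightTransvection i j} ∪ {g | ∃ σ ε, g = signedPerm σ ε})

variable {α : Type*} [DecidableEq α]

lemma rightTransvection_mem_nielsenSubgroup {i j : α} (hij : i ≠ j) :
    rightTransvection i j ∈ nielsenSubgroup α :=
  Subgroup.subset_closure (Or.inl ⟨i, j, hij, rfl⟩)

lemma signedPerm_mem_nielsenSubgroup (σ : Equiv.Perm α) (ε : α → ℤˣ) :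
    signedPerm σ ε ∈ nielsenSubgroup α :=
  Subgroup.subset_closure (Or.inr ⟨σ, ε, rfl⟩)

lemma leftTransvection_mem_nielsenSubgroup {i j : α} (hij : i ≠ j) :
    leftTransvection i j ∈ nielsenSubgroup α :=
  have hinv : inversion α ∈ nielsenSubgroup α := signedPerm_mem_nielsenSubgroup _ _
  mul_mem (mul_mem hinv (rightTransvection_mem_nielsenSubgroup hij)) (inv_mem hinv)

lemma exists_mem_nielsenSubgroup_map_mk {a b : α × Bool} (hab : a.1 ≠ b.1) :
    ∃ h ∈ nielsenSubgroup α, h (mk [a]) = mk [a] * mk [b] ∧ ∀ k ≠ a.1, h (of k) = of k := by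
  obtain ⟨j, s⟩ := a
  obtain ⟨i, t⟩ := b
  have hij : i ≠ j := hab.symm
  have hR := rightTransvection_mem_nielsenSubgroup hij
  have hL := leftTransvection_mem_nielsenSubgroup hij
  have mk_true (k : α) : mk [(k, true)] = of k := rfl
  have mk_false (k : α) : mk [(k, false)] = (of k)⁻¹ := rfl
  cases s <;> cases t <;> simp only [mk_true, mk_false]
  · exact ⟨_, hL, by simp [hij], fun k hk => by simp [hk]⟩
  · exact ⟨_, inv_mem hL, by simp [hij], fun k hk => by simp [hk]⟩
  · exact ⟨_, inv_mem hR, by simp [hij], fun k hk => by simp [hk]⟩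
  · exact ⟨_, hR, by simp [hij], fun k hk => by simp [hk]⟩

lemma exists_eq_of_zpow_of_norm_eq_one {x : FreeGroup α} (hx : x.norm = 1) :
    ∃ (i : α) (e : ℤˣ), x = of i ^ (e : ℤ) := by
  obtain ⟨⟨i, s⟩, hword⟩ := List.length_eq_one_iff.1 hx
  rw [← mk_toWord (x := x), hword]
  cases s
  · exact ⟨i, -1, (_root_.zpow_neg_one (of i)).symm⟩
  · exact ⟨i, 1, (zpow_one _).symm⟩

omit [DecidableEq α] in
lemma of_zpow_units_injective {i j : α} {e d : ℤˣ} (h : of i ^ (e : ℤ) = of j ^ (d : ℤ)) :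
    i = j := by
  classical
  have hword := congrArg (fun x => x.toWord.map Prod.fst) h
  obtain rfl | rfl := Int.units_eq_one_or e <;> obtain rfl | rfl := Int.units_eq_one_or d <;>
    simpa [invRev] using hword

lemma exists_eq_signedPerm [Finite α] {g : MulAut (FreeGroup α)}
    (hg : ∀ i, (g (of i)).norm ≤ 1) : ∃ σ ε, g = signedPerm σ ε := by
  have hone : ∀ i, (g (of i)).norm = 1 := fun i =>
    le_antisymm (hg i) (Nat.one_le_iff_ne_zero.2 (by simp))
  choose τ ε hτ using fun i => exists_eq_of_zpow_of_norm_eq_one (hone i)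
  have hinj : Function.Injective τ := by
    intro i j hij
    refine of_zpow_units_injective (e := ε i) (d := ε j) (g.injective ?_)
    rw [map_zpow, map_zpow, hτ, hτ, hij, zpow_units_zpow_units, zpow_units_zpow_units,
      Int.units_mul_self, Int.units_mul_self]
  exact ⟨.ofBijective τ (Finite.injective_iff_bijective.1 hinj), ε,
    mulAut_ext fun i => by simp [hτ]⟩

variable [Fintype α]

lemma weight_map_mk {β : Type*} (g : FreeGroup β →* FreeGroup α) (a : β × Bool) :
    weight (g (mk [a])) = weight (g (of a.1)) := by
  obtain ⟨i, _ | _⟩ := a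
  · rw [show mk [(i, false)] = (of i)⁻¹ from rfl, map_inv, weight_inv]
  · rfl

/-- The total weight of the images of the generators, which decreases in Nielsen reduction. -/
noncomputable def totalWeight {β : Type*} [Fintype β] (g : FreeGroup β →* FreeGroup α) :
    ℕ ×ₗ ℕ :=
  ∑ i, weight (g (of i))

lemma exists_totalWeight_lt {g : MulAut (FreeGroup α)} (hg : ¬ NielsenReduced g.toMonoidHom) :
    ∃ h ∈ nielsenSubgroup α, totalWeight (g * h).toMonoidHom < totalWeight g.toMonoidHom := by
  obtain ⟨a, b, hab, hlt⟩ : ∃ a b : α × Bool, a.1 ≠ b.1 ∧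
      weight (g (mk [a]) * g (mk [b])) < weight (g (mk [a])) := by
    by_contra! h
    exact hg ⟨by simp, h⟩
  obtain ⟨h, hmem, hmul, hfix⟩ := exists_mem_nielsenSubgroup_map_mk hab
  have hlt' : weight ((g * h) (of a.1)) < weight (g (of a.1)) := by
    have hgh := weight_map_mk (g * h).toMonoidHom a
    have hga := weight_map_mk g.toMonoidHom a
    simp only [MulEquiv.toMonoidHom_eq_coe, MonoidHom.coe_coe] at hgh hga
    rwa [← hgh, ← hga, MulAut.mul_apply, hmul, map_mul]
  refine ⟨h, hmem, Finset.sum_lt_sum (fun k _ => ?_) ⟨a.1, Finset.mem_univ _, hlt'⟩⟩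
  obtain rfl | hk := eq_or_ne k a.1
  · exact hlt'.le
  · simp [hfix k hk]

omit [Fintype α] in
/-- **Nielsen's theorem**. -/
theorem nielsenSubgroup_eq_top [Finite α] : nielsenSubgroup α = ⊤ := by
  cases nonempty_fintype α
  refine (Subgroup.eq_top_iff' _).2 fun g => ?_
  induction h : totalWeight g.toMonoidHom using WellFoundedLT.induction generalizing g with
  | ind w ih =>
    subst h
    by_cases hg : NielsenReduced g.toMonoidHom
    · obtain ⟨σ, ε, hσ⟩ := exists_eq_signedPerm (g := g⁻¹) fun i => by
        simpa using hg.norm_le_norm_map (g⁻¹ (of i))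
      exact (inv_mem_iff (x := g)).1 (hσ ▸ signedPerm_mem_nielsenSubgroup σ ε)
    · obtain ⟨h, hmem, hlt⟩ := exists_totalWeight_lt hg
      exact (Subgroup.mul_mem_cancel_right _ hmem).1 (ih _ hlt _ rfl)

end Nielsen

/-! ### Steinberg systems -/

section Lowers

/-- Subtracting `y` from `x` brings `x` closer to zero without changing its sign. -/
def Lowers (x y : ℤ) : Prop := (0 < y ∧ y ≤ x) ∨ (y < 0 ∧ x ≤ y)

namespace Lowers

variable {x y z : ℤ} {e d : ℤˣ}

lemma natAbs_sub_lt (h : Lowers x y) : (x - y).natAbs < x.natAbs := by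
  unfold Lowers at h
  omega

lemma ne_zero (h : Lowers x y) : x ≠ 0 := by
  unfold Lowers at h
  omega

lemma right_ne_zero (h : Lowers x y) : y ≠ 0 := by
  unfold Lowers at h
  omega

lemma units_mul (u : ℤˣ) (h : Lowers x y) : Lowers (u * x) (u * y) := by
  unfold Lowers at h ⊢
  obtain rfl | rfl := Int.units_eq_one_or u <;> simp <;> omega

lemma unit_unique (h₁ : Lowers x (e * y)) (h₂ : Lowers x (d * y)) : e = d := by
  unfold Lowers at h₁ h₂
  obtain rfl | rfl := Int.units_eq_one_or e <;> obtain rfl | rfl := Int.units_eq_one_or d <;>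
    simp at h₁ h₂ ⊢ <;> omega

lemma eq_of_lowers_mul (h₁ : Lowers x (e * y)) (h₂ : Lowers y (d * x)) : e = d ∧ x = e * y := by
  unfold Lowers at h₁ h₂
  obtain rfl | rfl := Int.units_eq_one_or e <;> obtain rfl | rfl := Int.units_eq_one_or d <;>
    simp at h₁ h₂ ⊢ <;> omega

lemma trans (h₁ : Lowers x (e * y)) (h₂ : Lowers y (d * z)) :
    Lowers (x - e * (y - d * z)) ((e * d : ℤˣ) * z) := by
  unfold Lowers at h₁ h₂ ⊢
  obtain rfl | rfl := Int.units_eq_one_or e <;> obtain rfl | rfl := Int.units_eq_one_or d <;>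
    simp at h₁ h₂ ⊢ <;> omega

lemma mul_sub (h₁ : Lowers x (e * y)) (h₂ : Lowers y (d * z)) (hne : y - d * z ≠ 0) :
    Lowers x (e * (y - d * z)) := by
  unfold Lowers at h₁ h₂ ⊢
  obtain rfl | rfl := Int.units_eq_one_or e <;> obtain rfl | rfl := Int.units_eq_one_or d <;>
    simp at h₁ h₂ hne ⊢ <;> omega

lemma of_natAbs_le (h₁ : Lowers x (e * y)) (h₂ : Lowers x (d * z)) (hle : z.natAbs ≤ y.natAbs) :
    Lowers y ((e * d : ℤˣ) * z) := by
  unfold Lowers at h₁ h₂ ⊢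
  obtain rfl | rfl := Int.units_eq_one_or e <;> obtain rfl | rfl := Int.units_eq_one_or d <;>
    simp at h₁ h₂ ⊢ <;> omega

end Lowers

lemma lowers_trichotomy (e : ℤˣ) (x : ℤ) {y : ℤ} (hy : y ≠ 0) :
    Lowers (x + e * y) (e * y) ∨ Lowers x ((-e : ℤˣ) * y) ∨
      (Lowers y ((-e : ℤˣ) * x) ∧ Lowers (x - e * (y + e * x)) ((-e : ℤˣ) * (y + e * x))) := by
  unfold Lowers
  obtain rfl | rfl := Int.units_eq_one_or e <;> simp <;> omega

end Lowers

lemma conj_mem_of_conj_mem {G : Type*} [Group G] {A : Set G} {K : Subgroup G} {x : G}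
    (h : ∀ a ∈ A, x * a * x⁻¹ ∈ K) {a : G} (ha : a ∈ Subgroup.closure A) : x * a * x⁻¹ ∈ K :=
  (Subgroup.closure_le (K.comap (MulAut.conj x).toMonoidHom)).2 h ha

/-- A group with elements that behave like the elementary matrices and the signed permutation
matrices of `GL(ι, ℤ)`, together with a homomorphism to integral matrices that sends them there. The
group is in general not generated by these elements. -/
structure SteinbergSystem (ι Q : Type*) [Fintype ι] [DecidableEq ι] [Group Q] where
  /-- The matrix of an element. -/
  M : Q →* Matrix ι ι ℤ
  /-- The elementary elements, which lie over the matrices that add row `j` to row `i`. -/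
  t : ι → ι → Q
  /-- The signed permutations, which lie over the matrices with entries `ε l` at `(σ l, l)`. -/
  w : Equiv.Perm ι → (ι → ℤˣ) → Q
  t_commute : ∀ {i j k l}, i ≠ j → k ≠ l → j ≠ k → i ≠ l → Commute (t i j) (t k l)
  commutator_t : ∀ {i j k}, i ≠ j → j ≠ k → i ≠ k → ⁅t i j, t j k⁆ = t i k
  w_mul : ∀ σ τ ε δ, w σ ε * w τ δ = w (σ * τ) fun i => ε (τ i) * δ i
  w_conj_t : ∀ {i j}, i ≠ j → ∀ σ ε,
    w σ ε * t i j * (w σ ε)⁻¹ = t (σ i) (σ j) ^ ((ε i * ε j : ℤˣ) : ℤ)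
  weyl : ∀ {i j}, i ≠ j →
    t i j * (t j i)⁻¹ * t i j = w (Equiv.swap i j) (Function.update 1 i (-1))
  M_t : ∀ {i j}, i ≠ j → M (t i j) = transvection i j 1
  M_w : ∀ σ ε, M (w σ ε) = Matrix.of fun k l => if k = σ l then (ε l : ℤ) else 0

namespace SteinbergSystem

variable {ι Q : Type*} [Fintype ι] [DecidableEq ι] [Group Q] (D : SteinbergSystem ι Q)

section Relations

variable {i j k l : ι}

/-- The elementary elements and their inverses. -/
def E (i j : ι) (e : ℤˣ) : Q := D.t i j ^ (e : ℤ)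

lemma E_one (i j : ι) : D.E i j 1 = D.t i j := by
  simp [E]

lemma E_neg (i j : ι) (e : ℤˣ) : D.E i j (-e) = (D.E i j e)⁻¹ := by
  simp [E]

lemma E_commute (hij : i ≠ j) (hkl : k ≠ l) (hjk : j ≠ k) (hil : i ≠ l) (e d : ℤˣ) :
    Commute (D.E i j e) (D.E k l d) :=
  (D.t_commute hij hkl hjk hil).zpow_zpow _ _

lemma w_one : D.w 1 1 = 1 := by
  have h := D.w_mul 1 1 1 1
  simp only [mul_one, Pi.one_apply] at h
  exact mul_eq_left.1 h

lemma w_inv (σ : Equiv.Perm ι) (ε : ι → ℤˣ) : (D.w σ ε)⁻¹ = D.w σ⁻¹ fun i => ε (σ⁻¹ i) := by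
  rw [inv_eq_iff_mul_eq_one, D.w_mul, ← D.w_one]
  congr 1
  · simp
  · funext i
    simp

lemma w_conj_E (hij : i ≠ j) (σ : Equiv.Perm ι) (ε : ι → ℤˣ) (e : ℤˣ) :
    D.w σ ε * D.E i j e * (D.w σ ε)⁻¹ = D.E (σ i) (σ j) (ε i * ε j * e) := by
  rw [E, ← conj_zpow, D.w_conj_t hij, zpow_units_zpow_units, E]

lemma w_mul_E (hij : i ≠ j) (σ : Equiv.Perm ι) (ε : ι → ℤˣ) (e : ℤˣ) :
    D.w σ ε * D.E i j e = D.E (σ i) (σ j) (ε i * ε j * e) * D.w σ ε := by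
  rw [← D.w_conj_E hij, inv_mul_cancel_right]

lemma commutator_E (hij : i ≠ j) (hjk : j ≠ k) (hik : i ≠ k) (e d : ℤˣ) :
    ⁅D.E i j e, D.E j k d⁆ = D.E i k (e * d) := by
  set δ : ι → ℤˣ := Function.update (Function.update 1 i e) k d
  have hi : δ i = e := by simp [δ, hik]
  have hj : δ j = 1 := by simp [δ, hij.symm, hjk]
  have hk : δ k = d := by simp [δ]
  have hconj := map_commutatorElement (MulAut.conj (D.w 1 δ)) (D.t i j) (D.t j k)
  rw [D.commutator_t hij hjk hik] at hconj
  simpa [MulAut.conj_apply, D.w_conj_t, hij, hjk, hik, hi, hj, hk, E] using hconj.symm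

lemma weyl_E (hij : i ≠ j) (e : ℤˣ) : ∃ ε : ι → ℤˣ, (∀ k, k ≠ i → k ≠ j → ε k = 1) ∧
    D.E i j e * D.E j i (-e) * D.E i j e = D.w (Equiv.swap i j) ε := by
  set δ : ι → ℤˣ := Function.update 1 i e
  have hi : δ i = e := by simp [δ]
  have hj : δ j = 1 := by simp [δ, hij.symm]
  have hconj : D.E i j e * D.E j i (-e) * D.E i j e = D.w 1 δ *
      D.w (Equiv.swap i j) (Function.update 1 i (-1)) * (D.w 1 δ)⁻¹ := by
    rw [← D.weyl hij, ← MulAut.conj_apply, map_mul, map_mul, map_inv]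
    simp [D.w_conj_t, hij, hij.symm, hi, hj, E]
  rw [D.w_inv, D.w_mul, D.w_mul, one_mul, inv_one, mul_one] at hconj
  exact ⟨_, fun k hki hkj => by simp [δ, hki, hkj, Equiv.swap_apply_of_ne_of_ne], hconj⟩

lemma M_E (hij : i ≠ j) (e : ℤˣ) : D.M (D.E i j e) = transvection i j (e : ℤ) := by
  obtain rfl | rfl := Int.units_eq_one_or e
  · simp [E_one, D.M_t hij]
  · refine left_inv_eq_right_inv (a := D.M (D.t i j)) ?_ ?_
    · rw [E_neg, E_one, ← map_mul, inv_mul_cancel, map_one]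
    · simp [D.M_t hij, transvection_mul_transvection_same _ _ hij]

lemma M_E_mul_apply_same (hij : i ≠ j) (e : ℤˣ) (q : Q) (l : ι) :
    D.M (D.E i j e * q) i l = D.M q i l + e * D.M q j l := by
  rw [map_mul, D.M_E hij, transvection_mul_apply_same]

lemma M_E_neg_mul_apply_same (hij : i ≠ j) (e : ℤˣ) (q : Q) (l : ι) :
    D.M (D.E i j (-e) * q) i l = D.M q i l - e * D.M q j l := by
  rw [M_E_mul_apply_same _ hij, Units.val_neg, neg_mul, sub_eq_add_neg]

lemma M_E_mul_apply_of_ne (hij : i ≠ j) (e : ℤˣ) (q : Q) {k : ι} (hk : k ≠ i) (l : ι) :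
    D.M (D.E i j e * q) k l = D.M q k l := by
  rw [map_mul, D.M_E hij, transvection_mul_apply_of_ne _ _ _ _ hk]

lemma M_E_mul_apply_of_eq_zero (hij : i ≠ j) (e : ℤˣ) {q : Q} {l : ι} (h : D.M q j l = 0) (k : ι) :
    D.M (D.E i j e * q) k l = D.M q k l := by
  obtain rfl | hk := eq_or_ne k i
  · rw [M_E_mul_apply_same _ hij, h, mul_zero, add_zero]
  · exact D.M_E_mul_apply_of_ne hij e q hk l

lemma M_w_mul_apply (σ : Equiv.Perm ι) (ε : ι → ℤˣ) (q : Q) (k l : ι) :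
    D.M (D.w σ ε * q) (σ k) l = ε k * D.M q k l := by
  simp [D.M_w, Matrix.mul_apply]

end Relations

section Support

/-- The signed permutation given by `σ` and `ε` fixes the basis vectors outside `S`. -/
def SupportedOn (S : Finset ι) (σ : Equiv.Perm ι) (ε : ι → ℤˣ) : Prop :=
  ∀ k ∉ S, σ k = k ∧ ε k = 1

namespace SupportedOn

variable {S : Finset ι} {σ τ : Equiv.Perm ι} {ε δ : ι → ℤˣ}

omit [Fintype ι] [DecidableEq ι]

lemma mul (hσ : SupportedOn S σ ε) (hτ : SupportedOn S τ δ) :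
    SupportedOn S (σ * τ) fun i => ε (τ i) * δ i := fun k hk => by
  simp [hσ k hk, hτ k hk]

lemma inv (h : SupportedOn S σ ε) : SupportedOn S σ⁻¹ fun i => ε (σ⁻¹ i) := fun k hk => by
  have hk' : σ⁻¹ k = k := by rw [Equiv.Perm.inv_eq_iff_eq, (h k hk).1]
  simp [hk', h k hk]

lemma apply_mem_iff (h : SupportedOn S σ ε) {i : ι} : σ i ∈ S ↔ i ∈ S := by
  refine not_iff_not.1 ⟨fun hi => ?_, fun hi => ?_⟩
  · rwa [σ.injective (h _ hi).1] at hi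
  · rwa [(h i hi).1]

lemma swap [DecidableEq ι] {i j : ι} (hi : i ∈ S) (hj : j ∈ S)
    (h : ∀ k, k ≠ i → k ≠ j → ε k = 1) : SupportedOn S (Equiv.swap i j) ε := fun k hk =>
  have hki : k ≠ i := (ne_of_mem_of_not_mem hi hk).symm
  have hkj : k ≠ j := (ne_of_mem_of_not_mem hj hk).symm
  ⟨Equiv.swap_apply_of_ne_of_ne hki hkj, h k hki hkj⟩

end SupportedOn

end Support

section Subgroups

variable {S : Finset ι} {s : ι}

/-- The subgroup of elements whose matrix has the same `s`-th column as the identity matrix. -/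
def fixCol (s : ι) : Subgroup Q where
  carrier := {q | ∀ k, D.M q k s = (1 : Matrix ι ι ℤ) k s}
  one_mem' k := by simp
  mul_mem' {a b} ha hb k := by
    rw [← ha k]
    simp [Matrix.mul_apply, hb _, Matrix.one_apply]
  inv_mem' {a} ha k := by
    have h : D.M a⁻¹ * D.M a = 1 := by rw [← map_mul, inv_mul_cancel, map_one]
    rw [← h, Matrix.mul_apply]
    simp [ha _, Matrix.one_apply]

/-- The subgroup of elements whose matrix has the same `s`-th row as the identity matrix. -/
def fixRow (s : ι) : Subgroup Q where
  carrier := {q | ∀ l, D.M q s l = (1 : Matrix ι ι ℤ) s l}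
  one_mem' l := by simp
  mul_mem' {a b} ha hb l := by
    rw [← hb l]
    simp [Matrix.mul_apply, ha _, Matrix.one_apply]
  inv_mem' {a} ha l := by
    have h : D.M a * D.M a⁻¹ = 1 := by rw [← map_mul, mul_inv_cancel, map_one]
    rw [← h, Matrix.mul_apply]
    simp [ha _, Matrix.one_apply]

lemma E_mem_fixCol {i j : ι} (hij : i ≠ j) (hj : j ≠ s) (e : ℤˣ) : D.E i j e ∈ D.fixCol s :=
  fun k => by simp [D.M_E hij, transvection, hj]

lemma E_mem_fixRow {i j : ι} (hij : i ≠ j) (hi : i ≠ s) (e : ℤˣ) : D.E i j e ∈ D.fixRow s :=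
  fun l => by simp [D.M_E hij, transvection, hi]

lemma w_mem_fixCol {σ : Equiv.Perm ι} {ε : ι → ℤˣ} (hσ : σ s = s) (hε : ε s = 1) :
    D.w σ ε ∈ D.fixCol s :=
  fun k => by simp [D.M_w, hσ, hε, Matrix.one_apply]

lemma w_mem_fixRow {σ : Equiv.Perm ι} {ε : ι → ℤˣ} (hσ : σ s = s) (hε : ε s = 1) :
    D.w σ ε ∈ D.fixRow s := fun l => by
  obtain rfl | hl := eq_or_ne s l
  · simp [D.M_w, hσ, hε]
  · have : s ≠ σ l := fun h => hl (σ.injective (hσ.trans h))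
    simp [D.M_w, hl, this]

/-- The elementary elements and signed permutations supported on `S`. -/
def blockGenerators (S : Finset ι) : Set Q :=
  {q | ∃ i ∈ S, ∃ j ∈ S, i ≠ j ∧ ∃ e, q = D.E i j e} ∪
    {q | ∃ σ ε, SupportedOn S σ ε ∧ q = D.w σ ε}

/-- The subgroup generated by the elementary elements and signed permutations supported on `S`. -/
def block (S : Finset ι) : Subgroup Q := Subgroup.closure (D.blockGenerators S)

/-- The subgroup generated by the elementary elements in row `s`. -/
def row (s : ι) : Subgroup Q := Subgroup.closure {q | ∃ j, s ≠ j ∧ q = D.t s j}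

/-- The subgroup generated by the elementary elements in row `s` and the block on `S`. For `s ∉ S`
it is the stabilizer of the `s`-th basis vector in the block on `insert s S`, up to elementary
elements outside this block. -/
def stab (S : Finset ι) (s : ι) : Subgroup Q := D.row s ⊔ D.block S

variable {D}

lemma inv_mem_blockGenerators {q : Q} (hq : q ∈ D.blockGenerators S) :
    q⁻¹ ∈ D.blockGenerators S := by
  obtain ⟨i, hi, j, hj, hij, e, rfl⟩ | ⟨σ, ε, h, rfl⟩ := hq
  · exact Or.inl ⟨i, hi, j, hj, hij, -e, (D.E_neg i j e).symm⟩
  · exact Or.inr ⟨_, _, h.inv, D.w_inv σ ε⟩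

lemma E_mem_block {i j : ι} (hi : i ∈ S) (hj : j ∈ S) (hij : i ≠ j) (e : ℤˣ) :
    D.E i j e ∈ D.block S :=
  Subgroup.subset_closure (Or.inl ⟨i, hi, j, hj, hij, e, rfl⟩)

lemma t_mem_block {i j : ι} (hi : i ∈ S) (hj : j ∈ S) (hij : i ≠ j) : D.t i j ∈ D.block S :=
  D.E_one i j ▸ E_mem_block hi hj hij 1

lemma w_mem_block {σ : Equiv.Perm ι} {ε : ι → ℤˣ} (h : SupportedOn S σ ε) : D.w σ ε ∈ D.block S :=
  Subgroup.subset_closure (Or.inr ⟨σ, ε, h, rfl⟩)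

lemma E_mem_row {j : ι} (hj : s ≠ j) (e : ℤˣ) : D.E s j e ∈ D.row s :=
  have h : D.t s j ∈ D.row s := Subgroup.subset_closure ⟨j, hj, rfl⟩
  zpow_mem h _

lemma block_le_stab : D.block S ≤ D.stab S s := le_sup_right

lemma E_mem_stab {j : ι} (hj : s ≠ j) (e : ℤˣ) : D.E s j e ∈ D.stab S s :=
  le_sup_left (a := D.row s) (E_mem_row hj e)

lemma block_le_fixRow (hs : s ∉ S) : D.block S ≤ D.fixRow s := by
  refine (Subgroup.closure_le _).2 ?_
  rintro _ (⟨i, hi, j, -, hij, e, rfl⟩ | ⟨σ, ε, h, rfl⟩)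
  · exact D.E_mem_fixRow hij (ne_of_mem_of_not_mem hi hs) e
  · exact D.w_mem_fixRow (h s hs).1 (h s hs).2

lemma row_le_fixRow {k : ι} (hk : s ≠ k) : D.row s ≤ D.fixRow k := by
  refine (Subgroup.closure_le _).2 ?_
  rintro _ ⟨j, hj, rfl⟩
  exact D.E_one s j ▸ D.E_mem_fixRow hj hk 1

lemma stab_le_fixCol (hs : s ∉ S) : D.stab S s ≤ D.fixCol s := by
  refine sup_le ((Subgroup.closure_le _).2 ?_) ((Subgroup.closure_le _).2 ?_)
  · rintro _ ⟨j, hj, rfl⟩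
    exact D.E_one s j ▸ D.E_mem_fixCol hj hj.symm 1
  · rintro _ (⟨i, -, j, hj, hij, e, rfl⟩ | ⟨σ, ε, h, rfl⟩)
    · exact D.E_mem_fixCol hij (ne_of_mem_of_not_mem hj hs) e
    · exact D.w_mem_fixCol (h s hs).1 (h s hs).2

lemma conj_mem_row (hs : s ∉ S) {x a : Q} (hx : x ∈ D.blockGenerators S) (ha : a ∈ D.row s) :
    x * a * x⁻¹ ∈ D.row s := by
  refine conj_mem_of_conj_mem ?_ ha
  rintro _ ⟨k, hk, rfl⟩
  rw [← E_one]
  obtain ⟨i, hi, j, hj, hij, e, rfl⟩ | ⟨σ, ε, h, rfl⟩ := hx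
  · have hsi : s ≠ i := (ne_of_mem_of_not_mem hi hs).symm
    have hsj : s ≠ j := (ne_of_mem_of_not_mem hj hs).symm
    obtain rfl | hik := eq_or_ne i k
    · have hcomm := D.commutator_E hsi hij hsj 1 e
      have hconj : D.E i j e * D.E s i 1 * (D.E i j e)⁻¹ = (D.E s j (1 * e))⁻¹ * D.E s i 1 := by
        rw [← hcomm, commutatorElement_def]
        group
      rw [hconj]
      exact mul_mem (inv_mem (E_mem_row hsj _)) (E_mem_row hsi 1)
    · rw [(D.E_commute hij hk hsj.symm hik e 1).eq, mul_inv_cancel_right]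
      exact E_mem_row hk 1
  · rw [D.w_conj_E hk, (h s hs).1]
    exact E_mem_row (fun h' => hk (σ.injective ((h s hs).1.trans h'))) _

lemma block_le_normalizer_row (hs : s ∉ S) : D.block S ≤ Subgroup.normalizer (D.row s) := by
  refine (Subgroup.closure_le _).2 fun x hx => ?_
  refine Subgroup.mem_normalizer_iff.2 fun a => ⟨conj_mem_row hs hx, fun ha => ?_⟩
  simpa [mul_assoc] using conj_mem_row hs (inv_mem_blockGenerators hx) ha

lemma exists_row_mul_block (hs : s ∉ S) {u : Q} (hu : u ∈ D.stab S s) :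
    ∃ a ∈ D.row s, ∃ h ∈ D.block S, a * h = u := by
  rwa [← SetLike.mem_coe, stab,
    Subgroup.coe_mul_of_right_le_normalizer_left _ _ (block_le_normalizer_row hs)] at hu

variable (D s) in
lemma row_pairwise_commute : Pairwise fun j k : {j // s ≠ j} => ∀ x y : Multiplicative ℤ,
    Commute (zpowersHom Q (D.t s j) x) (zpowersHom Q (D.t s k) y) := fun j k _ _ _ =>
  (D.t_commute j.2 k.2 j.2.symm k.2).zpow_zpow _ _

variable (D s) in
/-- The homomorphism `c ↦ ∏ⱼ (t s j) ^ (c j)`, over `j ≠ s`. -/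
noncomputable def rowHom : ({j // s ≠ j} → Multiplicative ℤ) →* Q :=
  MonoidHom.noncommPiCoprod _ (D.row_pairwise_commute s)

lemma rowHom_mulSingle (j : {j // s ≠ j}) (e : ℤˣ) :
    D.rowHom s (Pi.mulSingle j (Multiplicative.ofAdd (e : ℤ))) = D.E s j e := by
  rw [rowHom, MonoidHom.noncommPiCoprod_mulSingle, E, zpowersHom_apply, toAdd_ofAdd]

lemma rowHom_M_eq {a : Q} (ha : a ∈ D.row s) :
    D.rowHom s (fun j => Multiplicative.ofAdd (D.M a s j)) = a := by
  have hmul : ∀ j, s ≠ j → ∀ e : ℤˣ, ∀ q ∈ D.row s,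
      D.rowHom s (fun k => Multiplicative.ofAdd (D.M q s k)) = q →
      D.rowHom s (fun k => Multiplicative.ofAdd (D.M (D.E s j e * q) s k)) = D.E s j e * q := by
    intro j hj e q hq ih
    rw [← rowHom_mulSingle ⟨j, hj⟩]
    conv_rhs => rw [← ih, ← map_mul]
    congr 1
    funext k
    rw [rowHom_mulSingle, M_E_mul_apply_same _ hj, row_le_fixRow hj hq, ofAdd_add, mul_comm]
    obtain rfl | hjk := eq_or_ne (⟨j, hj⟩ : {j // s ≠ j}) k
    · simp
    · simp [Pi.mulSingle_eq_of_ne hjk.symm, Matrix.one_apply_ne (Subtype.coe_ne_coe.2 hjk)]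
  induction ha using Subgroup.closure_induction_left with
  | one =>
    refine (congrArg _ (funext fun j => ?_)).trans (map_one (D.rowHom s))
    simp [j.2]
  | mul_left x hx q hq ih =>
    obtain ⟨j, hj, rfl⟩ := hx
    exact D.E_one s j ▸ hmul j hj 1 q hq ih
  | inv_mul_cancel x hx q hq ih =>
    obtain ⟨j, hj, rfl⟩ := hx
    exact D.E_one s j ▸ D.E_neg s j 1 ▸ hmul j hj (-1) q hq ih

lemma eq_one_of_mem_row {a : Q} (ha : a ∈ D.row s) (h : a ∈ D.fixRow s) : a = 1 := by
  rw [← rowHom_M_eq ha, ← map_one (D.rowHom s)]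
  congr 1
  funext j
  simp [h _, j.2]

lemma eq_one_of_mem_stab (hs : s ∉ S) (ih : ∀ q ∈ D.block S, D.M q = 1 → q = 1) {u : Q}
    (hu : u ∈ D.stab S s) (hM : D.M u = 1) : u = 1 := by
  obtain ⟨a, ha, h, hh, rfl⟩ := exists_row_mul_block hs hu
  have hah : a * h ∈ D.fixRow s := fun l => by rw [hM]
  have ha1 : a = 1 := eq_one_of_mem_row ha
    ((Subgroup.mul_mem_cancel_right _ (block_le_fixRow hs hh)).1 hah)
  rw [ha1, one_mul] at hM ⊢
  exact ih h hh hM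

end Subgroups

/-! ### Confluence of Euclidean column reduction -/

section Columns

variable {D} {S : Finset ι} {s : ι} {q x : Q} {i j k l : ι}

variable (D) in
/-- The subgroup generated by the elementary elements in column `j` with row index in `S`. -/
def col (S : Finset ι) (j : ι) : Subgroup Q := Subgroup.closure {q | ∃ i ∈ S, i ≠ j ∧ q = D.t i j}

lemma E_mem_col (hi : i ∈ S) (hij : i ≠ j) (e : ℤˣ) : D.E i j e ∈ D.col S j :=
  have h : D.t i j ∈ D.col S j := Subgroup.subset_closure ⟨i, hi, hij, rfl⟩
  zpow_mem h _

lemma M_mul_apply_of_mem_col (hx : x ∈ D.col S j) (h0 : D.M q j s = 0) (k : ι) :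
    D.M (x * q) k s = D.M q k s := by
  induction hx using Subgroup.closure_induction_left generalizing k with
  | one => rw [one_mul]
  | mul_left x hx y _ ih =>
    obtain ⟨i, -, hij, rfl⟩ := hx
    rw [← E_one, mul_assoc, D.M_E_mul_apply_of_eq_zero hij _ ((ih j).trans h0), ih]
  | inv_mul_cancel x hx y _ ih =>
    obtain ⟨i, -, hij, rfl⟩ := hx
    rw [← E_one, ← E_neg, mul_assoc, D.M_E_mul_apply_of_eq_zero hij _ ((ih j).trans h0), ih]

lemma E_conj_mem_col (hk : k ∈ S) (hkl : k ≠ l) (hjk : j ≠ k) (hjl : j ≠ l) (d : ℤˣ)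
    (hx : x ∈ D.col S j) : D.E k l d * x * (D.E k l d)⁻¹ ∈ D.col S j := by
  refine conj_mem_of_conj_mem ?_ hx
  rintro _ ⟨i, hi, hij, rfl⟩
  rw [← E_one]
  obtain rfl | hil := eq_or_ne i l
  · have hconj : D.E k i d * D.E i j 1 * (D.E k i d)⁻¹ = D.E k j (d * 1) * D.E i j 1 := by
      rw [← D.commutator_E hkl hij hjk.symm, commutatorElement_def, inv_mul_cancel_right]
    rw [hconj]
    exact mul_mem (E_mem_col hk hjk.symm _) (E_mem_col hi hij 1)
  · rw [(D.E_commute hkl hij hil.symm hjk.symm d 1).eq, mul_inv_cancel_right]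
    exact E_mem_col hi hij 1

lemma E_mem_stab_of_mem (hi : i ∈ insert s S) (hj : j ∈ S) (hij : i ≠ j) (e : ℤˣ) :
    D.E i j e ∈ D.stab S s := by
  obtain rfl | hi := Finset.mem_insert.1 hi
  · exact E_mem_stab hij e
  · exact block_le_stab (E_mem_block hi hj hij e)

lemma w_conj_mem_stab {σ : Equiv.Perm ι} {ε : ι → ℤˣ} (h : SupportedOn (insert s S) σ ε)
    (hj : σ j ∈ S) (hx : x ∈ D.col (insert s S) j) :
    D.w σ ε * x * (D.w σ ε)⁻¹ ∈ D.stab S s := by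
  refine conj_mem_of_conj_mem ?_ hx
  rintro _ ⟨i, hi, hij, rfl⟩
  rw [← E_one, D.w_conj_E hij]
  exact E_mem_stab_of_mem (h.apply_mem_iff.2 hi) hj (σ.injective.ne hij) _

end Columns

section Reduction

variable {D} {S : Finset ι} {s : ι} {q x : Q} {i j : ι}

variable (D) in
/-- Left multiplication by `E i j (-e)` is a reduction step for the `s`-th column of `q`. -/
structure Shrinks (S : Finset ι) (s : ι) (q : Q) (i j : ι) (e : ℤˣ) : Prop where
  left_mem : i ∈ insert s S
  right_mem : j ∈ insert s S
  ne : i ≠ j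
  lowers : Lowers (D.M q i s) (e * D.M q j s)

variable (D) in
/-- The elements that can be brought, by reduction steps for the `s`-th column, into the product of
a signed permutation supported on `insert s S` and an element of `stab S s`. -/
inductive Reduces (S : Finset ι) (s : ι) : Q → Prop
  | base (σ : Equiv.Perm ι) (ε : ι → ℤˣ) (h : SupportedOn (insert s S) σ ε) (u : Q)
      (hu : u ∈ D.stab S s) : Reduces S s (D.w σ ε * u)
  | step (q : Q) (i j : ι) (e : ℤˣ) (h : D.Shrinks S s q i j e)
      (hq : Reduces S s (D.E i j (-e) * q)) : Reduces S s q

lemma E_neg_mul_E_mul (i j : ι) (e : ℤˣ) (q : Q) : D.E i j (-e) * (D.E i j e * q) = q := by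
  rw [E_neg, inv_mul_cancel_left]

lemma E_mul_E_neg_mul (i j : ι) (e : ℤˣ) (q : Q) : D.E i j e * (D.E i j (-e) * q) = q := by
  rw [E_neg, mul_inv_cancel_left]

lemma Reduces.w_mul (hq : D.Reduces S s q) {σ : Equiv.Perm ι} {ε : ι → ℤˣ}
    (h : SupportedOn (insert s S) σ ε) : D.Reduces S s (D.w σ ε * q) := by
  induction hq with
  | base τ δ hτ u hu =>
    rw [← mul_assoc, D.w_mul]
    exact .base _ _ (h.mul hτ) u hu
  | step q i j e hq _ ih =>
    refine .step _ (σ i) (σ j) (ε i * ε j * e) ⟨h.apply_mem_iff.2 hq.left_mem,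
      h.apply_mem_iff.2 hq.right_mem, σ.injective.ne hq.ne, ?_⟩ ?_
    · have hsq : (ε j : ℤ) * ε j = 1 := by rw [← Units.val_mul, Int.units_mul_self, Units.val_one]
      rw [M_w_mul_apply, M_w_mul_apply]
      convert hq.lowers.units_mul (ε i) using 1
      push_cast
      linear_combination (ε i * e * D.M q j s : ℤ) * hsq
    · rwa [← mul_neg, ← mul_assoc, ← D.w_mul_E hq.ne, mul_assoc]

lemma Reduces.mul_of_mem_col (hs : s ∉ S) (hq : D.Reduces S s q) (hj : j ∈ insert s S)
    (h0 : D.M q j s = 0) (hx : x ∈ D.col (insert s S) j) : D.Reduces S s (x * q) := by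
  induction hq generalizing x with
  | base σ ε h u hu =>
    obtain ⟨j, rfl⟩ := σ.surjective j
    have hjs : j ≠ s := by
      rintro rfl
      rw [M_w_mul_apply, stab_le_fixCol hs hu, one_apply_eq, mul_one] at h0
      exact (ε j).ne_zero h0
    have hjS : j ∈ S := Finset.mem_of_mem_insert_of_ne (h.apply_mem_iff.1 hj) hjs
    have hx' := w_conj_mem_stab h.inv (by simpa using hjS) hx
    rw [← D.w_inv, inv_inv] at hx'
    convert Reduces.base σ ε h _ (mul_mem hx' hu) using 1
    group
  | step q k l d h hq ih =>
    have hjk : j ≠ k := by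
      rintro rfl
      exact h.lowers.ne_zero h0
    have hjl : j ≠ l := by
      rintro rfl
      exact h.lowers.right_ne_zero (by rw [h0, mul_zero])
    refine .step _ k l d ⟨h.left_mem, h.right_mem, h.ne, ?_⟩ ?_
    · rw [M_mul_apply_of_mem_col hx h0, M_mul_apply_of_mem_col hx h0]
      exact h.lowers
    · rw [← D.M_E_mul_apply_of_ne h.ne (-d) q hjk] at h0
      simpa [mul_assoc] using ih h0 (E_conj_mem_col h.left_mem h.ne hjk hjl (-d) hx)

lemma Reduces.E_mul_of_eq_zero (hs : s ∉ S) (hq : D.Reduces S s q) (hi : i ∈ insert s S)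
    (hj : j ∈ insert s S) (hij : i ≠ j) (e : ℤˣ) (h0 : D.M q j s = 0) :
    D.Reduces S s (D.E i j e * q) :=
  hq.mul_of_mem_col hs hj h0 (E_mem_col hi hij e)

end Reduction

section Confluence

variable {D} {S : Finset ι} {s : ι} {q : Q} {i j k l : ι} {e d : ℤˣ}

variable (D) in
/-- The `ℓ¹`-norm of the `s`-th column. -/
def colNorm (s : ι) (q : Q) : ℕ := ∑ i, (D.M q i s).natAbs

lemma colNorm_E_mul_of_eq_zero (hij : i ≠ j) (e : ℤˣ) (h0 : D.M q j s = 0) :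
    D.colNorm s (D.E i j e * q) = D.colNorm s q := by
  simp only [colNorm, D.M_E_mul_apply_of_eq_zero hij e h0]

lemma Shrinks.colNorm_lt (h : D.Shrinks S s q i j e) :
    D.colNorm s (D.E i j (-e) * q) < D.colNorm s q := by
  have hi : (D.M (D.E i j (-e) * q) i s).natAbs < (D.M q i s).natAbs := by
    rw [D.M_E_neg_mul_apply_same h.ne]
    exact h.lowers.natAbs_sub_lt
  refine Finset.sum_lt_sum (fun k _ => ?_) ⟨i, Finset.mem_univ i, hi⟩
  obtain rfl | hk := eq_or_ne k i
  · exact hi.le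
  · rw [D.M_E_mul_apply_of_ne h.ne _ _ hk]

lemma Shrinks.E_mul (h : D.Shrinks S s q k l d) (hij : i ≠ j) (hki : k ≠ i) (hli : l ≠ i)
    (e : ℤˣ) : D.Shrinks S s (D.E i j e * q) k l d :=
  ⟨h.left_mem, h.right_mem, h.ne, by
    rw [D.M_E_mul_apply_of_ne hij _ _ hki, D.M_E_mul_apply_of_ne hij _ _ hli]
    exact h.lowers⟩

lemma Shrinks.chain (h₁ : D.Shrinks S s q i j e) (h₂ : D.Shrinks S s q j l d) (hil : i ≠ l) :
    D.Shrinks S s (D.E i j (-e) * (D.E j l (-d) * q)) i l (e * d) := by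
  refine ⟨h₁.left_mem, h₂.right_mem, hil, ?_⟩
  rw [D.M_E_neg_mul_apply_same h₁.ne, D.M_E_mul_apply_of_ne h₂.ne _ _ h₁.ne,
    D.M_E_neg_mul_apply_same h₂.ne, D.M_E_mul_apply_of_ne h₁.ne _ _ hil.symm,
    D.M_E_mul_apply_of_ne h₂.ne _ _ h₂.ne.symm]
  exact h₁.lowers.trans h₂.lowers

lemma Shrinks.chain_left (h₁ : D.Shrinks S s q i j e) (h₂ : D.Shrinks S s q j l d)
    (h0 : D.M (D.E j l (-d) * q) j s ≠ 0) : D.Shrinks S s (D.E j l (-d) * q) i j e := by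
  refine ⟨h₁.left_mem, h₁.right_mem, h₁.ne, ?_⟩
  rw [D.M_E_neg_mul_apply_same h₂.ne] at h0 ⊢
  rw [D.M_E_mul_apply_of_ne h₂.ne _ _ h₁.ne]
  exact h₁.lowers.mul_sub h₂.lowers h0

lemma Shrinks.of_natAbs_le (h₁ : D.Shrinks S s q i j e) (h₂ : D.Shrinks S s q i l d) (hjl : j ≠ l)
    (hle : (D.M q l s).natAbs ≤ (D.M q j s).natAbs) : D.Shrinks S s q j l (e * d) :=
  ⟨h₁.right_mem, h₂.right_mem, hjl, h₁.lowers.of_natAbs_le h₂.lowers hle⟩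

variable (D) in
/-- Reduction steps preserve `Reduces` for elements of smaller column norm than `q`. -/
def ConfluentBelow (S : Finset ι) (s : ι) (q : Q) : Prop :=
  ∀ q', D.colNorm s q' < D.colNorm s q → D.Reduces S s q' →
    ∀ i j e, D.Shrinks S s q' i j e → D.Reduces S s (D.E i j (-e) * q')

lemma Reduces.of_disjoint (ih : D.ConfluentBelow S s q) (h₁ : D.Shrinks S s q i j e)
    (h₂ : D.Shrinks S s q k l d) (hki : k ≠ i) (hjk : j ≠ k) (hil : i ≠ l)
    (hq : D.Reduces S s (D.E i j (-e) * q)) : D.Reduces S s (D.E k l (-d) * q) := by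
  refine .step _ i j e (h₁.E_mul h₂.ne hki.symm hjk _) ?_
  have hcomm := D.E_commute h₁.ne h₂.ne hjk hil (-e) (-d)
  rw [← mul_assoc, hcomm.eq, mul_assoc]
  exact ih _ h₁.colNorm_lt hq k l d (h₂.E_mul h₁.ne hki hil.symm _)

lemma E_neg_mul_E_neg_mul (hij : i ≠ j) (hjl : j ≠ l) (hil : i ≠ l) (q : Q) :
    D.E j l (-d) * (D.E i j (-e) * q) =
      D.E i l (-(e * d)) * (D.E i j (-e) * (D.E j l (-d) * q)) := by
  have h := D.commutator_E hij hjl hil (-e) (-d)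
  rw [neg_mul_neg] at h
  rw [E_neg D i l, ← h, commutatorElement_def]
  group

lemma Reduces.of_chain (hs : s ∉ S) (ih : D.ConfluentBelow S s q) (h₁ : D.Shrinks S s q i j e)
    (h₂ : D.Shrinks S s q j l d) (hil : i ≠ l) (hq : D.Reduces S s (D.E i j (-e) * q)) :
    D.Reduces S s (D.E j l (-d) * q) := by
  have hjl := ih _ h₁.colNorm_lt hq j l d (h₂.E_mul h₁.ne h₁.ne.symm hil.symm _)
  rw [E_neg_mul_E_neg_mul h₁.ne h₂.ne hil] at hjl
  have hij := Reduces.step _ _ _ _ (h₁.chain h₂ hil) hjl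
  by_cases h0 : D.M (D.E j l (-d) * q) j s = 0
  · rw [← E_mul_E_neg_mul i j e (D.E j l (-d) * q)]
    refine hij.E_mul_of_eq_zero hs h₁.left_mem h₁.right_mem h₁.ne e ?_
    rw [D.M_E_mul_apply_of_eq_zero h₁.ne _ h0, h0]
  · exact .step _ i j e (h₁.chain_left h₂ h0) hij

lemma Reduces.of_chain_rev (hs : s ∉ S) (ih : D.ConfluentBelow S s q) (h₁ : D.Shrinks S s q i j e)
    (h₂ : D.Shrinks S s q j l d) (hil : i ≠ l) (hq : D.Reduces S s (D.E j l (-d) * q)) :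
    D.Reduces S s (D.E i j (-e) * q) := by
  have hij : D.Reduces S s (D.E i j (-e) * (D.E j l (-d) * q)) ∧
      D.colNorm s (D.E i j (-e) * (D.E j l (-d) * q)) < D.colNorm s q := by
    by_cases h0 : D.M (D.E j l (-d) * q) j s = 0
    · refine ⟨hq.E_mul_of_eq_zero hs h₁.left_mem h₁.right_mem h₁.ne _ h0, ?_⟩
      rw [colNorm_E_mul_of_eq_zero h₁.ne _ h0]
      exact h₂.colNorm_lt
    · have h := h₁.chain_left h₂ h0
      exact ⟨ih _ h₂.colNorm_lt hq _ _ _ h, h.colNorm_lt.trans h₂.colNorm_lt⟩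
  have hil' := ih _ hij.2 hij.1 _ _ _ (h₁.chain h₂ hil)
  rw [← E_neg_mul_E_neg_mul h₁.ne h₂.ne hil] at hil'
  exact .step _ j l d (h₂.E_mul h₁.ne h₁.ne.symm hil.symm _) hil'

lemma Reduces.of_same_row (hs : s ∉ S) (ih : D.ConfluentBelow S s q)
    (h₁ : D.Shrinks S s q i j e) (h₂ : D.Shrinks S s q i l d) (hjl : j ≠ l)
    (hq : D.Reduces S s (D.E i j (-e) * q)) : D.Reduces S s (D.E i l (-d) * q) := by
  obtain hle | hle := le_total (D.M q l s).natAbs (D.M q j s).natAbs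
  · have h₃ := h₁.of_natAbs_le h₂ hjl hle
    exact (hq.of_chain hs ih h₁ h₃ h₂.ne).of_disjoint ih h₃ h₂ h₁.ne h₂.ne.symm hjl
  · have h₃ := h₂.of_natAbs_le h₁ hjl.symm hle
    exact (hq.of_disjoint ih h₁ h₃ h₂.ne.symm hjl h₁.ne).of_chain_rev hs ih h₂ h₃ h₁.ne

lemma Reduces.of_swap (hs : s ∉ S) (h₁ : D.Shrinks S s q i j e) (h₂ : D.Shrinks S s q j i d)
    (hq : D.Reduces S s (D.E i j (-e) * q)) : D.Reduces S s (D.E j i (-d) * q) := by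
  obtain ⟨rfl, hM⟩ := h₁.lowers.eq_of_lowers_mul h₂.lowers
  obtain ⟨ε, hε, hw⟩ := D.weyl_E h₁.ne e
  have hE : D.E j i (-e) * q =
      D.E i j (-e) * (D.w (Equiv.swap i j) ε * (D.E i j (-e) * q)) := by
    rw [← hw, E_neg D i j]
    group
  rw [hE]
  refine (hq.w_mul (.swap h₁.left_mem h₁.right_mem hε)).E_mul_of_eq_zero hs
    h₁.left_mem h₁.right_mem h₁.ne _ ?_
  have hj := D.M_w_mul_apply (Equiv.swap i j) ε (D.E i j (-e) * q) i s
  rw [Equiv.swap_apply_left] at hj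
  rw [hj, D.M_E_neg_mul_apply_same h₁.ne, hM, sub_self, mul_zero]

lemma Reduces.confluent (hs : s ∉ S) (ih : D.ConfluentBelow S s q) (h₁ : D.Shrinks S s q i j e)
    (h₂ : D.Shrinks S s q k l d) (hq : D.Reduces S s (D.E i j (-e) * q)) :
    D.Reduces S s (D.E k l (-d) * q) := by
  obtain rfl | hik := eq_or_ne i k
  · obtain rfl | hjl := eq_or_ne j l
    · rwa [← h₁.lowers.unit_unique h₂.lowers]
    · exact hq.of_same_row hs ih h₁ h₂ hjl
  obtain rfl | hjk := eq_or_ne j k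
  · obtain rfl | hil := eq_or_ne i l
    · exact hq.of_swap hs h₁ h₂
    · exact hq.of_chain hs ih h₁ h₂ hil
  obtain rfl | hil := eq_or_ne i l
  · exact hq.of_chain_rev hs ih h₂ h₁ hjk.symm
  · exact hq.of_disjoint ih h₁ h₂ hik.symm hjk hil

lemma not_shrinks_w_mul_stab (hs : s ∉ S) {σ : Equiv.Perm ι} {ε : ι → ℤˣ} {u : Q}
    (hu : u ∈ D.stab S s) : ¬ D.Shrinks S s (D.w σ ε * u) k l d := fun h => by
  have hM : ∀ k, D.M (D.w σ ε * u) (σ k) s ≠ 0 → k = s := fun k hk => by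
    by_contra hks
    rw [M_w_mul_apply, stab_le_fixCol hs hu, one_apply_ne hks, mul_zero] at hk
    exact hk rfl
  obtain ⟨k, rfl⟩ := σ.surjective k
  obtain ⟨l, rfl⟩ := σ.surjective l
  refine h.ne (congrArg σ ?_)
  rw [hM k h.lowers.ne_zero, hM l (right_ne_zero_of_mul h.lowers.right_ne_zero)]

lemma Reduces.shrink (hs : s ∉ S) (hq : D.Reduces S s q) (h : D.Shrinks S s q k l d) :
    D.Reduces S s (D.E k l (-d) * q) := by
  induction hm : D.colNorm s q using Nat.strong_induction_on generalizing q k l d with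
  | _ m ih =>
    cases hq with
    | base σ ε hσ u hu => exact (not_shrinks_w_mul_stab hs hu h).elim
    | step q i j e h₁ hq =>
      exact hq.confluent hs (fun q' hlt hq' i j e h' => ih _ (hm ▸ hlt) hq' h' rfl) h₁ h

lemma Reduces.E_mul (hs : s ∉ S) (hq : D.Reduces S s q) (hi : i ∈ insert s S)
    (hj : j ∈ insert s S) (hij : i ≠ j) (e : ℤˣ) : D.Reduces S s (D.E i j e * q) := by
  by_cases h0 : D.M q j s = 0
  · exact hq.E_mul_of_eq_zero hs hi hj hij e h0
  obtain hup | hdown | ⟨hlow, hlow'⟩ := lowers_trichotomy e (D.M q i s) h0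
  · refine .step _ i j e ⟨hi, hj, hij, ?_⟩ (by rwa [E_neg_mul_E_mul])
    rwa [D.M_E_mul_apply_same hij, D.M_E_mul_apply_of_ne hij _ _ hij.symm]
  · simpa using hq.shrink hs ⟨hi, hj, hij, hdown⟩
  obtain ⟨ε, hε, hw⟩ := D.weyl_E hij e
  have hE : D.E i j e * q = D.w (Equiv.swap i j) ε * (D.E i j (-e) * (D.E j i e * q)) := by
    rw [← hw, E_neg, E_neg]
    group
  rw [hE]
  refine Reduces.w_mul (.step _ i j (-e) ⟨hi, hj, hij, ?_⟩ ?_) (.swap hi hj hε)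
  · rwa [D.M_E_neg_mul_apply_same hij, D.M_E_mul_apply_of_ne hij _ _ hij.symm,
      D.M_E_mul_apply_same hij.symm, D.M_E_mul_apply_of_ne hij.symm _ _ hij]
  · rw [neg_neg, E_mul_E_neg_mul]
    simpa using hq.shrink hs ⟨hj, hi, hij.symm, hlow⟩

end Confluence

section Faithful

variable {D} {S : Finset ι} {s : ι} {q : Q}

lemma reduces_of_mem_block (hs : s ∉ S) (hq : q ∈ D.block (insert s S)) : D.Reduces S s q := by
  have hmul : ∀ x ∈ D.blockGenerators (insert s S), ∀ q, D.Reduces S s q →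
      D.Reduces S s (x * q) := by
    rintro _ (⟨i, hi, j, hj, hij, e, rfl⟩ | ⟨σ, ε, h, rfl⟩) q hq
    · exact hq.E_mul hs hi hj hij e
    · exact hq.w_mul h
  induction hq using Subgroup.closure_induction_left with
  | one =>
    rw [← D.w_one, ← mul_one (D.w 1 1)]
    exact .base 1 1 (fun _ _ => ⟨rfl, rfl⟩) 1 (one_mem _)
  | mul_left x hx q _ ih => exact hmul x hx q ih
  | inv_mul_cancel x hx q _ ih => exact hmul _ (inv_mem_blockGenerators hx) q ih

lemma Reduces.mem_stab (hs : s ∉ S) (hq : D.Reduces S s q) (h : q ∈ D.fixCol s) :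
    q ∈ D.stab S s := by
  cases hq with
  | base σ ε hσ u hu =>
    have hσs : (1 : Matrix ι ι ℤ) (σ s) s = ε s := by
      rw [← h, M_w_mul_apply, stab_le_fixCol hs hu, one_apply_eq, mul_one]
    have hs' : σ s = s := by
      by_contra hne
      rw [one_apply_ne hne] at hσs
      exact (ε s).ne_zero hσs.symm
    rw [hs', one_apply_eq] at hσs
    refine mul_mem (block_le_stab (w_mem_block fun k hk => ?_)) hu
    obtain rfl | hks := eq_or_ne k s
    · exact ⟨hs', Units.ext hσs.symm⟩
    · exact hσ k (by simp [hks, hk])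
  | step _ i j e hq _ =>
    have hM : ∀ k, D.M q k s ≠ 0 → k = s := fun k hk => by
      by_contra hks
      exact hk ((h k).trans (one_apply_ne hks))
    have hi := hM i hq.lowers.ne_zero
    have hj := hM j (right_ne_zero_of_mul hq.lowers.right_ne_zero)
    exact (hq.ne (hi.trans hj.symm)).elim

theorem eq_one_of_mem_block (S : Finset ι) : ∀ q ∈ D.block S, D.M q = 1 → q = 1 := by
  induction S using Finset.induction_on with
  | empty =>
    refine fun q hq _ => (Subgroup.closure_le ⊥).2 ?_ hq
    rintro _ (⟨i, hi, -⟩ | ⟨σ, ε, h, rfl⟩)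
    · simp at hi
    · have hσ : σ = 1 := Equiv.ext fun k => (h k (by simp)).1
      have hε : ε = 1 := funext fun k => (h k (by simp)).2
      rw [hσ, hε, w_one]
      exact one_mem _
  | insert s S hs ih =>
    intro q hq hM
    exact eq_one_of_mem_stab hs ih ((reduces_of_mem_block hs hq).mem_stab hs fun k => by rw [hM]) hM

end Faithful

end SteinbergSystem

/-! ### The quotient by the Torelli part of the normal closure -/

section TorelliQuotient

variable {n : ℕ} {i j : Fin n}

lemma map_eq_one_or_neg_one_of_mem_normalClosure {G H : Type*} [Group G] [Group H]
    [HasDistribNeg H] {φ : G →* H} {x g : G} (hx : φ x = -1) (hg : g ∈ Subgroup.normalClosure {x}) :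
    φ g = 1 ∨ φ g = -1 := by
  induction hg using Subgroup.closure_induction with
  | one => simp
  | mem y hy =>
    obtain ⟨c, hc⟩ : ∃ c, c * x * c⁻¹ = y := by
      simpa [Group.mem_conjugatesOfSet_iff, isConj_iff] using hy
    right
    rw [← hc]
    simp [hx]
  | mul a b _ _ ha hb => obtain ha | ha := ha <;> obtain hb | hb := hb <;> simp [ha, hb]
  | inv a _ ha => obtain ha | ha := ha <;> simp [ha]

instance IA_normal (n : ℕ) : (IA n).Normal := inferInstanceAs (ρ n).ker.Normal

/-- The part of the Torelli subgroup that lies in the normal closure of the inversion. -/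
def torelliPart (n : ℕ) : Subgroup (FrAut n) := Subgroup.normalClosure {inversion (Fin n)} ⊓ IA n

instance torelliPart_normal (n : ℕ) : (torelliPart n).Normal :=
  inferInstanceAs (Subgroup.normalClosure {inversion (Fin n)} ⊓ IA n).Normal

lemma commutator_inversion_mem_torelliPart (g : FrAut n) :
    ⁅inversion (Fin n), g⁆ ∈ torelliPart n := by
  have hmem : inversion (Fin n) ∈ Subgroup.normalClosure {inversion (Fin n)} :=
    Subgroup.subset_normalClosure rfl
  refine ⟨?_, ?_⟩
  · rw [commutatorElement_def, mul_assoc, mul_assoc, ← mul_assoc g]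
    exact mul_mem hmem (Subgroup.normalClosure_normal.conj_mem _ (inv_mem hmem) g)
  · simp [IA, commutatorElement_def, ρ_inversion]

lemma mk_inversion_commute (q : FrAut n ⧸ torelliPart n) :
    Commute (inversion (Fin n) : FrAut n ⧸ torelliPart n) q := by
  obtain ⟨g, rfl⟩ := QuotientGroup.mk_surjective q
  exact commutatorElement_eq_one_iff_commute.1
    ((QuotientGroup.eq_one_iff _).2 (commutator_inversion_mem_torelliPart g))

lemma mk_leftTransvection (i j : Fin n) :
    (leftTransvection i j : FrAut n ⧸ torelliPart n) = rightTransvection i j := by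
  rw [leftTransvection, QuotientGroup.mk_mul, QuotientGroup.mk_mul, QuotientGroup.mk_inv,
    (mk_inversion_commute _).eq, mul_inv_cancel_right]

lemma mk_signedPerm_conj_rightTransvection (hij : i ≠ j) (σ : Equiv.Perm (Fin n))
    (ε : Fin n → ℤˣ) :
    (signedPerm σ ε * rightTransvection i j * (signedPerm σ ε)⁻¹ : FrAut n ⧸ torelliPart n) =
      rightTransvection (σ i) (σ j) ^ ((ε i * ε j : ℤˣ) : ℤ) := by
  obtain hε | hε := Int.units_eq_one_or (ε j)
  · rw [hε, mul_one]
    exact congrArg _ (signedPerm_conj_rightTransvection σ hij hε)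
  · have hneg : inversion (Fin n) * signedPerm σ (-ε) = signedPerm σ ε := by
      rw [inversion, signedPerm_mul]
      simp
    have hconj := congrArg (QuotientGroup.mk (s := torelliPart n))
      (signedPerm_conj_rightTransvection σ (ε := -ε) hij (by simp [hε]))
    calc (signedPerm σ ε * rightTransvection i j * (signedPerm σ ε)⁻¹ : FrAut n ⧸ torelliPart n)
      _ = inversion (Fin n) * (signedPerm σ (-ε) * rightTransvection i j *
            (signedPerm σ (-ε))⁻¹) * (inversion (Fin n) : FrAut n ⧸ torelliPart n)⁻¹ := by
        rw [← hneg, QuotientGroup.mk_mul, _root_.mul_inv_rev, QuotientGroup.mk_mul]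
        simp only [QuotientGroup.mk_inv, mul_assoc]
      _ = signedPerm σ (-ε) * rightTransvection i j * (signedPerm σ (-ε))⁻¹ := by
        rw [(mk_inversion_commute _).eq, mul_inv_cancel_right]
      _ = rightTransvection (σ i) (σ j) ^ ((ε i * ε j : ℤˣ) : ℤ) := by
        rw [hε, mul_neg_one]
        exact hconj

/-- The homomorphism induced by `matHom n` on the quotient by `torelliPart n`. -/
def quotientMatHom (n : ℕ) : FrAut n ⧸ torelliPart n →* Matrix (Fin n) (Fin n) ℤ :=
  QuotientGroup.lift (torelliPart n) (matHom n) fun _ hg => congrArg Units.val hg.2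

/-- The classes of the right transvections and signed permutations modulo `torelliPart n`. -/
def torelliQuotient (n : ℕ) : SteinbergSystem (Fin n) (FrAut n ⧸ torelliPart n) where
  M := quotientMatHom n
  t i j := rightTransvection i j
  w σ ε := signedPerm σ ε
  t_commute {i j k l} hij hkl hjk hil := by
    rw [← mk_leftTransvection k l]
    exact (rightTransvection_commute_leftTransvection hij hkl hjk hil).map
      (QuotientGroup.mk' (torelliPart n))
  commutator_t {i j k} hij hjk hik := by
    rw [← mk_leftTransvection i j]
    exact congrArg _ (commutator_leftTransvection_rightTransvection hij hjk hik)
  w_mul σ τ ε δ := congrArg _ (signedPerm_mul σ τ ε δ)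
  w_conj_t hij σ ε := mk_signedPerm_conj_rightTransvection hij σ ε
  weyl {i j} hij := by
    nth_rw 2 [← mk_leftTransvection i j]
    exact congrArg _ (rightTransvection_mul_inv_mul_leftTransvection hij)
  M_t hij := mat_rightTransvection hij
  M_w := mat_signedPerm

lemma mk_mem_block (g : FrAut n) :
    (g : FrAut n ⧸ torelliPart n) ∈ (torelliQuotient n).block Finset.univ := by
  have hle : nielsenSubgroup (Fin n) ≤ ((torelliQuotient n).block Finset.univ).comap
      (QuotientGroup.mk' (torelliPart n)) := by
    refine (Subgroup.closure_le _).2 ?_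
    rintro _ (⟨i, j, hij, rfl⟩ | ⟨σ, ε, rfl⟩)
    · exact SteinbergSystem.t_mem_block (D := torelliQuotient n) (Finset.mem_univ i)
        (Finset.mem_univ j) hij
    · exact SteinbergSystem.w_mem_block (D := torelliQuotient n) (σ := σ) (ε := ε) fun k hk =>
        (hk (Finset.mem_univ k)).elim
  exact hle (nielsenSubgroup_eq_top (α := Fin n) ▸ Subgroup.mem_top g)

lemma IA_le_torelliPart (n : ℕ) : IA n ≤ torelliPart n := fun g hg =>
  (QuotientGroup.eq_one_iff g).1 <|
    SteinbergSystem.eq_one_of_mem_block (D := torelliQuotient n) Finset.univ _ (mk_mem_block g)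
      (congrArg Units.val hg)

end TorelliQuotient

theorem normalClosure_of_total_inversion_general (n : ℕ) (f : FrAut n)
    (hf : ∀ i : Fin n, f (FreeGroup.of i) = (FreeGroup.of i)⁻¹) :
    IA n ≤ Subgroup.normalClosure {f} ∧
    ∀ g : FrAut n, g ∈ Subgroup.normalClosure {f} ↔ (ρ n g = 1 ∨ ρ n g = -1) := by
  obtain rfl : f = inversion (Fin n) := mulAut_ext fun i => by rw [hf, inversion_of]
  have hIA : IA n ≤ Subgroup.normalClosure {inversion (Fin n)} :=
    (IA_le_torelliPart n).trans inf_le_left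
  have hmem : inversion (Fin n) ∈ Subgroup.normalClosure {inversion (Fin n)} :=
    Subgroup.subset_normalClosure rfl
  refine ⟨hIA, fun g => ⟨map_eq_one_or_neg_one_of_mem_normalClosure ρ_inversion, ?_⟩⟩
  rintro (hg | hg)
  · exact hIA hg
  · have hfg : inversion (Fin n) * g ∈ IA n := by
      simp [IA, MonoidHom.mem_ker, ρ_inversion, hg]
    exact (Subgroup.mul_mem_cancel_left _ hmem).1 (hIA hfg)

/-- For `n ≥ 3`, if `f ∈ Aut(F_n)` inverts every generator, then `IA_n ⊆ N(f)` and
`N(f) = ρ⁻¹({I, -I})`. -/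
theorem normalClosure_of_total_inversion (n : ℕ) (hn : 3 ≤ n) (f : FrAut n)
    (hf : ∀ i : Fin n, f (FreeGroup.of i) = (FreeGroup.of i)⁻¹) :
    IA n ≤ Subgroup.normalClosure {f} ∧
    ∀ g : FrAut n, g ∈ Subgroup.normalClosure {f} ↔ (ρ n g = 1 ∨ ρ n g = -1) :=
  normalClosure_of_total_inversion_general n f hf

end NormalClosurePaper
end
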